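/- arXiv:1409.6714 — 4 statements merged into one kernel-verified Lean document; each statement's English description precedes it below -/
import Mathlib

section
/- Let D ⊆ ℝ^d be a measurable set and let F be a convex and symmetric (f ∈ F implies −f ∈ F) class of bounded integrable functions on D, with integration functional S(f) = ∫_D f(x) dx. Define r(n,F) = inf_{x_1,…,x_n ∈ D} sup { S(f) : f ∈ F, f(x_1) = ⋯ = f(x_n) = 0 }. Then: (i) every adaptive algorithm A_n (given by a first point x_1 ∈ D, point-selection maps ψ_j : ℝ^j → D producing x_{j+1} = ψ_j(f(x_1),…,f(x_j)), and an arbitrary output map φ : ℝ^n → ℝ with A_n(f) = φ(f(x_1),…,f(x_n))) has worst-case error sup_{f∈F} |S(f) − A_n(f)| ≥ r(n,F); and (ii) for every δ > 0 there exist points x_1,…,x_n ∈ D and coefficients a_1,…,a_n ∈ ℝ such that the nonadaptive linear algorithm A_n(f) = Σ_{i=1}^n a_i f(x_i) satisfies sup_{f∈F} |S(f) − A_n(f)| ≤ r(n,F) + δ. In particular, the infimum of worst-case errors over all adaptive algorithms using n function values equals r(n,F). -/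
/-!
Everything happens around the zero function, which lies in `F` by convexity and symmetry.

*Adaption does not help.* Run an adaptive algorithm on `0`, and let `f ∈ F` vanish at the points
it selects, with `∫ f` close to `r` or larger. The algorithm cannot tell `f`, `-f` and `0` apart,
so it outputs one number `c` for both `±f`, and one of `|± ∫ f - c|` is at least `|∫ f|`.

*Linear algorithms suffice.* Fix almost optimal points `x_i` and work in the linear span of `F`,
where `F` is absorbent, so that its gauge `p` is sublinear. On the common kernel of the
evaluations at the `x_i` the integral is at most `(r + δ) * p`. By Hahn-Banach its restriction to
this kernel extends to a functional `T ≤ (r + δ) * p` on the whole span. The integral minus `T`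
vanishes on the common kernel, hence is a linear combination of the evaluations: this combination
is the required algorithm, with error `T`. The general form is
`exists_linear_combination_abs_sub_le`. Passing to the span and using the gauge avoids having to
rule out vertical separating hyperplanes.
-/

open MeasureTheory Set

/-- A convex symmetric set is absorbent in its linear span. -/
theorem absorbent_of_span_eq_top {E : Type*} [AddCommGroup E] [Module ℝ E] {s : Set E}
    (hs : Convex ℝ s) (hneg : ∀ f ∈ s, -f ∈ s) (h0 : (0 : E) ∈ s)
    (hspan : Submodule.span ℝ s = ⊤) : Absorbent ℝ s := by
  have key : ∀ v ∈ Submodule.span ℝ s, ∃ c : ℝ, 0 < c ∧ ∀ t : ℝ, |t| ≤ c → t • v ∈ s := by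
    intro v hv
    induction hv using Submodule.span_induction with
    | mem v hv =>
      refine ⟨1, one_pos, fun t ht => ?_⟩
      rcases le_total 0 t with h | h
      · exact hs.smul_mem_of_zero_mem h0 hv ⟨h, (le_abs_self t).trans ht⟩
      · have := hs.smul_mem_of_zero_mem h0 (hneg v hv)
          (t := -t) ⟨by linarith, (neg_le_abs t).trans ht⟩
        simpa using this
    | zero => exact ⟨1, one_pos, fun t _ => by simpa using h0⟩
    | add v w _ _ ihv ihw =>
      obtain ⟨c, hc, hv⟩ := ihv
      obtain ⟨c', hc', hw⟩ := ihw
      refine ⟨min c c' / 2, by positivity, fun t ht => ?_⟩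
      have h2 : |2 * t| ≤ min c c' := by
        rw [abs_mul, abs_two]; linarith
      have := hs (hv (2 * t) (h2.trans (min_le_left _ _)))
        (hw (2 * t) (h2.trans (min_le_right _ _)))
        (a := 1 / 2) (b := 1 / 2) (by norm_num) (by norm_num) (by norm_num)
      convert this using 1
      module
    | smul a v _ ihv =>
      obtain ⟨c, hc, hv⟩ := ihv
      refine ⟨c / (|a| + 1), by positivity, fun t ht => ?_⟩
      rw [smul_smul]
      refine hv _ ?_
      rw [le_div_iff₀ (by positivity)] at ht
      rw [abs_mul]
      nlinarith [abs_nonneg t]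
  rw [absorbent_iff_eventually_nhdsNE_zero]
  intro v
  obtain ⟨c, hc, hv⟩ := key v (by rw [hspan]; trivial)
  refine eventually_nhdsWithin_of_eventually_nhds ?_
  filter_upwards [Metric.ball_mem_nhds (0 : ℝ) hc] with t ht
  exact hv t (by simpa [Real.norm_eq_abs] using (mem_ball_zero_iff.1 ht).le)

/-- Smolyak's lemma in a vector space spanned by the convex symmetric set `s`: if the functional
`S` is at most `R` on the elements of `s` annihilated by all `e i`, then some linear combination
of the `e i` approximates `S` on `s` up to `R`. -/
theorem exists_linear_combination_abs_sub_le {E ι : Type*} [AddCommGroup E] [Module ℝ E]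
    [Fintype ι] {s : Set E} (hs : Convex ℝ s) (hneg : ∀ f ∈ s, -f ∈ s) (h0 : (0 : E) ∈ s)
    (hspan : Submodule.span ℝ s = ⊤) (S : E →ₗ[ℝ] ℝ) (e : ι → E →ₗ[ℝ] ℝ) (R : ℝ)
    (hR : ∀ f ∈ s, (∀ i, e i f = 0) → S f ≤ R) :
    ∃ a : ι → ℝ, ∀ f ∈ s, |S f - ∑ i, a i * e i f| ≤ R := by
  have habs := absorbent_of_span_eq_top hs hneg h0 hspan
  have hR0 : 0 ≤ R := by simpa using hR 0 h0 (by simp)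
  obtain ⟨T, hT1, hT2⟩ := exists_extension_of_le_sublinear
    ⟨⨅ i, LinearMap.ker (e i), S.domRestrict (⨅ i, LinearMap.ker (e i))⟩
    (fun v => R * gauge s v)
    (fun c hc v => by
      simp only [gauge_smul_of_nonneg hc.le, smul_eq_mul]; ring)
    (fun v w => by
      rw [← mul_add]
      exact mul_le_mul_of_nonneg_left (gauge_add_le hs habs v w) hR0)
    (by
      rintro ⟨v, hv⟩
      change S v ≤ R * gauge s v
      have hv' : ∀ i, e i v = 0 := by simpa using hv
      have hlt : ∀ t, gauge s v < t → S v ≤ R * t := by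
        intro t ht
        obtain ⟨b, hb, hbt, g, hg, rfl⟩ := exists_lt_of_gauge_lt habs ht
        have hg' : S g ≤ R := hR g hg fun i => by
          have := hv' i
          simpa [hb.ne'] using this
        simp only [map_smul, smul_eq_mul]
        nlinarith
      refine ge_of_tendsto (x := nhdsWithin (gauge s v) (Ioi (gauge s v)))
        (f := fun t => R * t) ?_ ?_
      · exact ((continuous_const.mul continuous_id).tendsto _).mono_left nhdsWithin_le_nhds
      · filter_upwards [self_mem_nhdsWithin] with t ht using hlt t ht)
  have hmem : S - T ∈ Submodule.span ℝ (range e) := by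
    refine mem_span_of_iInf_ker_le_ker fun v hv => ?_
    have := hT1 ⟨v, hv⟩
    change T v = S v at this
    simp [this]
  obtain ⟨a, ha⟩ := (Submodule.mem_span_range_iff_exists_fun ℝ).1 hmem
  refine ⟨a, fun f hf => ?_⟩
  have hle : ∀ g ∈ s, T g ≤ R := fun g hg =>
    (hT2 g).trans (mul_le_of_le_one_right hR0 (gauge_le_one_of_mem hg))
  have hTf : S f - ∑ i, a i * e i f = T f := by
    have := congrArg (fun L : E →ₗ[ℝ] ℝ => L f) ha
    simp only [LinearMap.sum_apply, LinearMap.smul_apply, smul_eq_mul,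
      LinearMap.sub_apply] at this
    linarith
  rw [hTf]
  have h1 := hle f hf
  have h2 := hle _ (hneg f hf)
  rw [map_neg] at h2
  exact abs_le.2 ⟨by linarith, h1⟩

/-- Bakhvalov/Smolyak: for a convex and symmetric class `F` of bounded integrable
functions on a measurable set `D ⊆ ℝ^d`, with `S f = ∫_D f` and
`r = inf_{x_1,…,x_n} sup { S f : f ∈ F, f(x_1) = ⋯ = f(x_n) = 0 }`
(characterized by the hypotheses `hr1`, `hr2`):

(i) every adaptive algorithm using `n` function values — encoded by a point-selection
map `pts` such that the `j`-th point depends only on the previously computed values,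
together with an arbitrary output map `φ` — has worst case error at least `r`;

(ii) for every `δ > 0` there is a nonadaptive linear algorithm `f ↦ ∑ a_i f(x_i)`
with worst case error at most `r + δ`.

In particular the infimum of worst case errors over all adaptive algorithms is `r`. -/
theorem stmt0 (d n : ℕ) (D : Set (Fin d → ℝ)) (hD : MeasurableSet D)
    (F : Set ((Fin d → ℝ) → ℝ))
    (hconv : ∀ f ∈ F, ∀ g ∈ F, ∀ t : ℝ, 0 ≤ t → t ≤ 1 →
      (fun x => t * f x + (1 - t) * g x) ∈ F)
    (hsym : ∀ f ∈ F, (fun x => -f x) ∈ F)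
    (hbdd : ∀ f ∈ F, ∃ M : ℝ, ∀ x ∈ D, |f x| ≤ M)
    (hint : ∀ f ∈ F, IntegrableOn f D)
    (r : ℝ)
    -- r is a lower bound of the inf-sup: for every point set, the sup of S f over the
    -- f ∈ F vanishing at the points is at least r
    (hr1 : ∀ x : Fin n → Fin d → ℝ, (∀ i, x i ∈ D) → ∀ ε : ℝ, 0 < ε →
      ∃ f ∈ F, (∀ i, f (x i) = 0) ∧ r - ε < ∫ y in D, f y)
    -- r is an upper bound of the inf-sup up to ε
    (hr2 : ∀ ε : ℝ, 0 < ε → ∃ x : Fin n → Fin d → ℝ, (∀ i, x i ∈ D) ∧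
      ∀ f ∈ F, (∀ i, f (x i) = 0) → (∫ y in D, f y) ≤ r + ε) :
    -- (i) every adaptive algorithm has worst case error at least r
    (∀ (pts : ((Fin d → ℝ) → ℝ) → Fin n → Fin d → ℝ) (φ : (Fin n → ℝ) → ℝ),
      (∀ f ∈ F, ∀ i, pts f i ∈ D) →
      (∀ f ∈ F, ∀ g ∈ F, ∀ j : Fin n,
        (∀ i : Fin n, i < j → f (pts f i) = g (pts g i)) → pts f j = pts g j) →
      ∀ ε : ℝ, 0 < ε → ∃ f ∈ F,
        r - ε < |(∫ y in D, f y) - φ (fun i => f (pts f i))|) ∧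
    -- (ii) a nonadaptive linear algorithm with error at most r + δ exists
    (∀ δ : ℝ, 0 < δ →
      ∃ (x : Fin n → Fin d → ℝ) (a : Fin n → ℝ), (∀ i, x i ∈ D) ∧
        ∀ f ∈ F, |(∫ y in D, f y) - ∑ i, a i * f (x i)| ≤ r + δ) := by
  -- `hr2` provides points of `D`, so `hr1` shows that `F` is nonempty.
  obtain ⟨x₀, hx₀, -⟩ := hr2 1 one_pos
  obtain ⟨f₀, hf₀, -, -⟩ := hr1 x₀ hx₀ 1 one_pos
  have h0 : (0 : (Fin d → ℝ) → ℝ) ∈ F := by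
    have := hconv f₀ hf₀ _ (hsym f₀ hf₀) (1 / 2) (by norm_num) (by norm_num)
    convert this using 1
    ext x
    simp only [Pi.zero_apply]
    ring
  constructor
  · intro pts φ hpts hadapt ε hε
    obtain ⟨f, hf, hfz, hfr⟩ := hr1 (pts 0) (hpts 0 h0) ε hε
    -- A function vanishing at the points selected for `0` leads to the same points.
    have hsame : ∀ g ∈ F, (∀ i, g (pts 0 i) = 0) → ∀ j, pts g j = pts 0 j := by
      intro g hg hgz j
      induction j using WellFoundedLT.induction with
      | ind j ih =>
        refine hadapt g hg 0 h0 j fun i hij => ?_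
        rw [ih i hij, hgz i, Pi.zero_apply]
    have hvals : ∀ g ∈ F, (∀ i, g (pts 0 i) = 0) → (fun i => g (pts g i)) = fun _ => 0 := by
      intro g hg hgz
      ext i
      rw [hsame g hg hgz i, hgz i]
    have hv1 := hvals f hf hfz
    have hv2 := hvals _ (hsym f hf) (fun i => by simp [hfz i])
    set c := φ (fun _ => 0) with hc
    rcases le_total c 0 with h | h
    · refine ⟨f, hf, ?_⟩
      rw [hv1, ← hc]
      exact lt_of_lt_of_le (by linarith) (le_abs_self _)
    · refine ⟨_, hsym f hf, ?_⟩
      rw [hv2, ← hc, integral_neg]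
      exact lt_of_lt_of_le (by linarith) (neg_le_abs _)
  · intro δ hδ
    obtain ⟨x, hx, hxF⟩ := hr2 δ hδ
    have hintV : ∀ f ∈ Submodule.span ℝ F, IntegrableOn f D := by
      intro f hf
      induction hf using Submodule.span_induction with
      | mem f hf => exact hint f hf
      | zero => exact integrableOn_zero
      | add f g _ _ ihf ihg => exact ihf.add ihg
      | smul a f _ ihf => exact ihf.smul a
    let S : Submodule.span ℝ F →ₗ[ℝ] ℝ :=
      { toFun := fun f => ∫ y in D, f.1 y
        map_add' := fun f g => integral_add (hintV f f.2) (hintV g g.2)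
        map_smul' := fun a f => integral_const_mul a f.1 }
    let e : Fin n → Submodule.span ℝ F →ₗ[ℝ] ℝ := fun i =>
      (LinearMap.proj (x i)).comp (Submodule.span ℝ F).subtype
    obtain ⟨a, ha⟩ := exists_linear_combination_abs_sub_le
      (s := ((↑) : Submodule.span ℝ F → (Fin d → ℝ) → ℝ) ⁻¹' F)
      (by
        intro f hf g hg t u ht hu htu
        have := hconv f.1 hf g.1 hg t ht (by linarith)
        obtain rfl : u = 1 - t := by linarith
        exact this)
      (fun f hf => hsym f.1 hf) h0 Submodule.span_span_coe_preimage S e (r + δ)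
      (fun f hf hz => hxF f.1 hf hz)
    exact ⟨x, a, hx, fun f hf => ha ⟨f, Submodule.subset_span hf⟩ hf⟩
end

section
/- Let k, d ∈ ℕ and let F_d^k = { f : [0,1]^d → ℝ : for every multi-index α ∈ ℕ_0^d with |α| = α_1+⋯+α_d ≤ k, the partial derivative D^α f exists, is continuous on [0,1]^d, and satisfies ‖D^α f‖_∞ ≤ 1 }. Then there exist constants c, C > 0 (depending on k and d) such that for all n ≥ 1: c · n^{−k/d} ≤ e(n, F_d^k) ≤ C · n^{−k/d}. -/
/-!
Both bounds concern functions indistinguishable from the data.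

Upper bound. An algorithm may return the integral of any member of the class consistent with the
data, so it suffices that two members `f`, `g` with equal data are uniformly close. Sample on the
grid of mesh `1 / (m k)`, `m ≈ n ^ (1 / d) / k`. In one variable, a function whose `k`-th derivative
is bounded and which is small at `k` equispaced nodes of an interval of length `1 / m` is
`O(m ^ (-k))` there: compare it with its Taylor polynomial and bound the latter by Lagrange
interpolation (`poly_bound`, `oneD_bound`). Applying this to `f - g` one coordinate at a time inside
a cell of side `1 / m` gives `|f - g| = O(m ^ (-k))` on the cube (`grid_bound`). Only the pure
derivatives `∂_j ^ k` enter.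

Lower bound. Split the cube into `m ^ d ≥ 2 n` cells with `m ≤ 4 n ^ (1 / d)`. At least half of the
cells carry a rescaled bump that vanishes at all sample points; the sum `f` of the bumps
`c m ^ (-k) ψ (m x - p)` over these cells belongs to the class because the supports are disjoint,
vanishes at the sample points, and has integral `≳ m ^ (-k)` (`fooling`). Since `f` and `-f` yield
the same data, every algorithm errs by at least `∫ f` on one of them.
-/

open MeasureTheory Set

/-- First-order partial derivative in direction `i`, taken within the cube `[0,1]^d`. -/
noncomputable def pd (d : ℕ) (i : Fin d) (f : (Fin d → ℝ) → ℝ) : (Fin d → ℝ) → ℝ :=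
  fun x => fderivWithin ℝ f (Set.Icc 0 1) x (Pi.single i 1)

/-- `m`-fold partial derivative in direction `i` within the cube. -/
noncomputable def pdIter (d : ℕ) (i : Fin d) : ℕ → ((Fin d → ℝ) → ℝ) → ((Fin d → ℝ) → ℝ)
  | 0, f => f
  | m + 1, f => pd d i (pdIter d i m f)

/-- The partial derivative `D^α f` for a multi-index `α`, within the cube. -/
noncomputable def mDeriv {d : ℕ} (α : Fin d → ℕ) (f : (Fin d → ℝ) → ℝ) : (Fin d → ℝ) → ℝ :=
  (List.finRange d).foldr (fun i g => pdIter d i (α i) g) f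

/-- Membership in the class `F_d^k`: `f` is `C^k` on `[0,1]^d` and all partial
derivatives `D^α f` with `|α| ≤ k` are bounded by 1 in sup norm on the cube. -/
def memFdk (d k : ℕ) (f : (Fin d → ℝ) → ℝ) : Prop :=
  ContDiffOn ℝ k f (Set.Icc 0 1) ∧
    ∀ α : Fin d → ℕ, (∑ i, α i) ≤ k →
      ∀ x ∈ Set.Icc (0 : Fin d → ℝ) 1, |mDeriv α f x| ≤ 1

/-! ### Slices of functions in the class -/

lemma uniqueDiffOn_cube (d : ℕ) : UniqueDiffOn ℝ (Set.Icc (0 : Fin d → ℝ) 1) := by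
  rw [← Set.pi_univ_Icc]
  exact UniqueDiffOn.univ_pi fun i => uniqueDiffOn_Icc zero_lt_one

lemma update_mem_cube {d : ℕ} {x : Fin d → ℝ} (hx : x ∈ Set.Icc (0 : Fin d → ℝ) 1) (j : Fin d)
    {t : ℝ} (ht : t ∈ Set.Icc (0 : ℝ) 1) : Function.update x j t ∈ Set.Icc (0 : Fin d → ℝ) 1 := by
  rw [← Set.pi_univ_Icc] at hx ⊢
  intro i _
  by_cases h : i = j
  · subst h; simpa using ht
  · simpa [h] using hx i (mem_univ i)

lemma contDiffOn_pdIter (d : ℕ) (j : Fin d) (m a : ℕ) (f : (Fin d → ℝ) → ℝ)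
    (hf : ContDiffOn ℝ ((a + m : ℕ) : WithTop ℕ∞) f (Set.Icc 0 1)) :
    ContDiffOn ℝ (a : WithTop ℕ∞) (pdIter d j m f) (Set.Icc 0 1) := by
  induction m generalizing a with
  | zero => simpa [pdIter] using hf
  | succ m ih =>
    have h := ih (a + 1) (by convert hf using 2; ring_nf)
    have h2 := h.fderivWithin (m := (a : WithTop ℕ∞)) (uniqueDiffOn_cube d) (by norm_cast)
    exact h2.clm_apply contDiffOn_const

/-- Along a line parallel to the `j`-th axis, the pure partial derivatives `∂_j^m f` within the
cube are the one-dimensional iterated derivatives of the slice. -/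
lemma iteratedDerivWithin_slice {d k : ℕ} (j : Fin d) {f : (Fin d → ℝ) → ℝ}
    (hf : ContDiffOn ℝ k f (Set.Icc 0 1)) {x : Fin d → ℝ} (hx : x ∈ Set.Icc (0 : Fin d → ℝ) 1)
    (m : ℕ) (hm : m ≤ k) : ∀ t ∈ Set.Icc (0 : ℝ) 1,
    iteratedDerivWithin m (fun t => f (Function.update x j t)) (Set.Icc 0 1) t
      = pdIter d j m f (Function.update x j t) := by
  induction m with
  | zero => intro t _; simp [pdIter]
  | succ m ih =>
    intro t ht
    have ih' := ih (by omega)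
    rw [iteratedDerivWithin_succ, derivWithin_congr ih' (ih' t ht)]
    have hc : ContDiffOn ℝ ((1 : ℕ) : WithTop ℕ∞) (pdIter d j m f) (Set.Icc 0 1) :=
      contDiffOn_pdIter d j m 1 f (hf.of_le (by exact_mod_cast (by omega : 1 + m ≤ k)))
    have hd := (hc.differentiableOn (by simp)) _ (update_mem_cube hx j ht)
    have h := hd.hasFDerivWithinAt.comp_hasDerivWithinAt t
      (hasDerivAt_update x j t).hasDerivWithinAt (s := Set.Icc (0 : ℝ) 1)
      (fun s hs => update_mem_cube hx j hs)
    exact h.derivWithin (uniqueDiffOn_Icc zero_lt_one t ht)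

lemma contDiffOn_slice {d k : ℕ} (j : Fin d) {f : (Fin d → ℝ) → ℝ}
    (hf : ContDiffOn ℝ k f (Set.Icc 0 1)) {x : Fin d → ℝ} (hx : x ∈ Set.Icc (0 : Fin d → ℝ) 1) :
    ContDiffOn ℝ k (fun t => f (Function.update x j t)) (Set.Icc 0 1) :=
  hf.comp (contDiff_update k x j).contDiffOn fun _ ht => update_mem_cube hx j ht

lemma mDeriv_single {d : ℕ} (j : Fin d) (k : ℕ) (f : (Fin d → ℝ) → ℝ) :
    mDeriv (Pi.single j k) f = pdIter d j k f := by
  have key : ∀ l : List (Fin d), l.Nodup →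
      l.foldr (fun i g => pdIter d i ((Pi.single j k : Fin d → ℕ) i) g) f
        = if j ∈ l then pdIter d j k f else f := by
    intro l
    induction l with
    | nil => simp
    | cons a l ih =>
      intro hl
      rw [List.nodup_cons] at hl
      rw [List.foldr_cons, ih hl.2]
      by_cases h : a = j
      · subst h; simp [hl.1]
      · have h' : j ≠ a := fun e => h e.symm
        simp [h, h', pdIter]
  have := key _ (List.nodup_finRange d)
  simpa [mDeriv] using this

/-- The pure `k`-th derivatives of an axis-parallel slice of a member of the class are at most 1. -/
lemma memFdk.slice_bound {d k : ℕ} {f : (Fin d → ℝ) → ℝ} (hf : memFdk d k f) (j : Fin d)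
    {x : Fin d → ℝ} (hx : x ∈ Set.Icc (0 : Fin d → ℝ) 1) {t : ℝ} (ht : t ∈ Set.Icc (0 : ℝ) 1) :
    |iteratedDerivWithin k (fun t => f (Function.update x j t)) (Set.Icc 0 1) t| ≤ 1 := by
  rw [iteratedDerivWithin_slice j hf.1 hx k le_rfl t ht, ← mDeriv_single]
  exact hf.2 _ (by simp [Finset.sum_pi_single']) _ (update_mem_cube hx j ht)

/-! ### Interpolation on the grid -/

/-- Lagrange interpolation at the `k` equispaced nodes `a + L * i / k` is stable: a polynomial of
degree `< k` bounded by `B` at the nodes is bounded by `k * k ^ k * B` on the interval. -/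
lemma poly_bound (k : ℕ) (hk : 1 ≤ k) (a L B : ℝ) (hL : 0 < L) (P : Polynomial ℝ)
    (hP : P.degree < k) (hB : ∀ i < k, |P.eval (a + L * i / k)| ≤ B) {t : ℝ}
    (ht : t ∈ Set.Icc a (a + L)) : |P.eval t| ≤ k * k ^ k * B := by
  have hk0 : (0 : ℝ) < k := by exact_mod_cast hk
  have hk1 : (1 : ℝ) ≤ k := by exact_mod_cast hk
  set v : ℕ → ℝ := fun i => a + L * i / k with hv
  have hinj : Set.InjOn v (Finset.range k) := by
    intro i _ i' _ h
    have h1 : L * i / k = L * i' / k := by simpa [hv] using h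
    field_simp at h1
    exact_mod_cast h1
  have hB0 : 0 ≤ B := (abs_nonneg _).trans (hB 0 (by omega))
  rw [Lagrange.eq_interpolate (f := P) hinj (by simpa using hP), Lagrange.interpolate_apply,
    Polynomial.eval_finsetSum]
  have hterm : ∀ i ∈ Finset.range k,
      |Polynomial.eval t (Polynomial.C (Polynomial.eval (v i) P)
        * Lagrange.basis (Finset.range k) v i)| ≤ k ^ k * B := by
    intro i hi
    rw [Polynomial.eval_mul, Polynomial.eval_C, abs_mul, mul_comm]
    refine mul_le_mul ?_ (hB i (Finset.mem_range.1 hi)) (abs_nonneg _) (by positivity)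
    rw [Lagrange.basis, Polynomial.eval_prod, Finset.abs_prod]
    calc _ ≤ ∏ _j ∈ (Finset.range k).erase i, (k : ℝ) := by
          refine Finset.prod_le_prod (fun _ _ => abs_nonneg _) fun j hj => ?_
          have hne := (Finset.mem_erase.1 hj).1
          have hjk := Finset.mem_range.1 (Finset.mem_erase.1 hj).2
          have h1 : (1 : ℝ) ≤ |(i : ℝ) - j| := by
            have : (1 : ℤ) ≤ |(i : ℤ) - j| := Int.one_le_abs (by omega)
            exact_mod_cast this
          have h2 : |t - v j| ≤ L := by
            have hjk' : (j : ℝ) / k ≤ 1 := by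
              rw [div_le_one hk0]; exact_mod_cast hjk.le
            have h3 : 0 ≤ L * j / k := by positivity
            have h4 : L * j / k ≤ L := by
              rw [mul_div_assoc]; exact mul_le_of_le_one_right hL.le hjk'
            rw [abs_le]; simp only [hv]; constructor <;> linarith [ht.1, ht.2]
          have h5 : |v i - v j| = L / k * |(i : ℝ) - j| := by
            have h6 : v i - v j = L / k * ((i : ℝ) - j) := by simp only [hv]; ring
            rw [h6, abs_mul, abs_of_pos (show 0 < L / k by positivity)]
          simp only [Lagrange.basisDivisor, Polynomial.eval_mul, Polynomial.eval_C,
            Polynomial.eval_sub, Polynomial.eval_X]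
          rw [abs_mul, abs_inv, inv_mul_le_iff₀ (by rw [h5]; positivity), h5]
          calc |t - v j| ≤ L := h2
            _ = L / k * 1 * k := by field_simp
            _ ≤ _ := by gcongr
      _ = (k : ℝ) ^ ((Finset.range k).erase i).card := by simp
      _ ≤ _ := pow_le_pow_right₀ hk1 (by
          simpa using Finset.card_le_card (Finset.erase_subset i (Finset.range k)))
  calc _ ≤ ∑ i ∈ Finset.range k, _ := Finset.abs_sum_le_sum_abs _ _
    _ ≤ ∑ i ∈ Finset.range k, (k : ℝ) ^ k * B := Finset.sum_le_sum hterm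
    _ = _ := by simp; ring

/-- Replacing `u` by its Taylor polynomial of degree `< k` costs `M * L ^ k`, and the polynomial is
controlled by its node values through `poly_bound`. -/
lemma oneD_bound (k : ℕ) (hk : 1 ≤ k) (a L M B : ℝ) (hL : 0 < L) (u : ℝ → ℝ)
    (hu : ContDiffOn ℝ k u (Set.Icc a (a + L)))
    (hM : ∀ y ∈ Set.Icc a (a + L), |iteratedDerivWithin k u (Set.Icc a (a + L)) y| ≤ M)
    (hB : ∀ i < k, |u (a + L * i / k)| ≤ B) {t : ℝ} (ht : t ∈ Set.Icc a (a + L)) :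
    |u t| ≤ M * L ^ k + k * k ^ k * (B + M * L ^ k) := by
  obtain ⟨n, rfl⟩ : ∃ n, k = n + 1 := ⟨k - 1, by omega⟩
  have hM0 : 0 ≤ M := (abs_nonneg _).trans (hM a ⟨le_rfl, by linarith⟩)
  set P : Polynomial ℝ := ∑ j ∈ Finset.range (n + 1),
    Polynomial.C ((j.factorial : ℝ)⁻¹ * iteratedDerivWithin j u (Set.Icc a (a + L)) a)
      * (Polynomial.X - Polynomial.C a) ^ j with hPdef
  have hPe : ∀ s, P.eval s = taylorWithinEval u n (Set.Icc a (a + L)) a s := by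
    intro s
    rw [taylor_within_apply, hPdef, Polynomial.eval_finsetSum]
    refine Finset.sum_congr rfl fun j _ => ?_
    simp; ring
  have hPd : P.degree < (n + 1 : ℕ) := by
    rw [← Polynomial.mem_degreeLT]
    refine Submodule.sum_mem _ fun j hj => ?_
    rw [Polynomial.mem_degreeLT]
    have hdeg : ((Polynomial.X - Polynomial.C a) ^ j).degree = (j : WithBot ℕ) := by
      rw [Polynomial.degree_pow, Polynomial.degree_X_sub_C]; simp
    refine lt_of_le_of_lt (Polynomial.degree_mul_le _ _) ?_
    rw [hdeg]
    calc _ ≤ (0 : WithBot ℕ) + j := by gcongr; exact Polynomial.degree_C_le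
      _ < _ := by rw [zero_add]; exact_mod_cast Finset.mem_range.1 hj
  have hR : ∀ s ∈ Set.Icc a (a + L), |u s - P.eval s| ≤ M * L ^ (n + 1) := by
    intro s hs
    rw [hPe]
    have h := taylor_mean_remainder_bound (by linarith) (by exact_mod_cast hu) hs hM
    refine h.trans ((div_le_self (mul_nonneg hM0 (pow_nonneg (by linarith [hs.1]) _))
      (by exact_mod_cast Nat.one_le_iff_ne_zero.2 n.factorial_ne_zero)).trans ?_)
    gcongr
    · linarith [hs.1]
    · linarith [hs.2]
  have hnode : ∀ i < n + 1, a + L * i / (n + 1 : ℕ) ∈ Set.Icc a (a + L) := by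
    intro i hi
    have h1 : (i : ℝ) / (n + 1 : ℕ) ≤ 1 := by
      rw [div_le_one (by positivity)]; exact_mod_cast hi.le
    have h2 : L * i / (n + 1 : ℕ) ≤ L := by
      rw [mul_div_assoc]; exact mul_le_of_le_one_right hL.le h1
    have h3 : 0 ≤ L * i / (n + 1 : ℕ) := by positivity
    constructor <;> linarith
  have hPB := poly_bound (n + 1) hk a L (B + M * L ^ (n + 1)) hL P hPd (fun i hi => by
    have h1 := abs_le.1 (hB i hi)
    have h2 := abs_le.1 (hR _ (hnode i hi))
    rw [abs_le]; constructor <;> linarith [h1.1, h1.2, h2.1, h2.2]) ht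
  have h1 := abs_le.1 hPB
  have h2 := abs_le.1 (hR _ ht)
  rw [abs_le]; constructor <;> linarith [h1.1, h1.2, h2.1, h2.2]

/-- Constants of the tensor-product interpolation bound: the factor in front of `m ^ (-k)` after
`j` coordinates have been freed. -/
noncomputable def gridConst (k : ℕ) : ℕ → ℝ
  | 0 => 0
  | j + 1 => 2 + k * k ^ k * (gridConst k j + 2)

lemma gridConst_nonneg (k j : ℕ) : 0 ≤ gridConst k j := by
  induction j with
  | zero => simp [gridConst]
  | succ j ih => simp only [gridConst]; positivity

/-- Two members of the class that agree on the grid `{q / (m k) : 0 ≤ q < m k}^d` differ by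
`O(m ^ (-k))` on the cube. The coordinates are released from the grid one at a time, inside a
fixed cell of side `1 / m`. -/
lemma grid_bound {d k m : ℕ} (hk : 1 ≤ k) (hm : 1 ≤ m) {f g : (Fin d → ℝ) → ℝ}
    (hf : memFdk d k f) (hg : memFdk d k g)
    (hfg : ∀ q : Fin d → Fin (m * k), f (fun i => (q i : ℝ) / (m * k : ℕ))
      = g (fun i => (q i : ℝ) / (m * k : ℕ)))
    {x : Fin d → ℝ} (hx : x ∈ Set.Icc (0 : Fin d → ℝ) 1) :
    |f x - g x| ≤ gridConst k d * (1 / m : ℝ) ^ k := by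
  have hm0 : (0 : ℝ) < m := by exact_mod_cast hm
  have hk0 : (0 : ℝ) < k := by exact_mod_cast hk
  have hcell : ∀ i, ∃ p < m, x i ∈ Set.Icc ((p : ℝ) / m) (p / m + 1 / m) := by
    intro i
    have h0 : 0 ≤ x i := hx.1 i
    have h1 : x i ≤ 1 := hx.2 i
    rcases h1.eq_or_lt with h1 | h1
    · refine ⟨m - 1, by omega, ?_⟩
      rw [h1, Nat.cast_sub hm]
      constructor
      · rw [div_le_one hm0]; simp
      · rw [← add_div]; simp [hm0.ne']
    · refine ⟨⌊x i * m⌋₊, ?_, ?_, ?_⟩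
      · rw [Nat.floor_lt (by positivity)]; nlinarith
      · rw [div_le_iff₀ hm0]; exact Nat.floor_le (by positivity)
      · rw [← add_div, le_div_iff₀ hm0]; exact (Nat.lt_floor_add_one _).le
  choose p hpm hp using hcell
  have hsub : ∀ i, Set.Icc ((p i : ℝ) / m) (p i / m + 1 / m) ⊆ Set.Icc 0 1 := by
    intro i
    refine Set.Icc_subset_Icc (by positivity) ?_
    rw [← add_div, div_le_one hm0]; exact_mod_cast hpm i
  have key : ∀ s : Finset (Fin d), ∀ y : Fin d → ℝ,
      (∀ i, y i ∈ Set.Icc ((p i : ℝ) / m) (p i / m + 1 / m)) →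
      (∀ i ∉ s, ∃ q < k, y i = (p i : ℝ) / m + 1 / m * (q : ℕ) / k) →
      |f y - g y| ≤ gridConst k s.card * (1 / m : ℝ) ^ k := by
    intro s
    induction s using Finset.induction_on with
    | empty =>
      intro y _ hy2
      choose q hqk hq using fun i => hy2 i (Finset.notMem_empty i)
      have hlt : ∀ i, p i * k + q i < m * k := fun i => by
        have := Nat.mul_le_mul_right k (hpm i)
        have := hqk i
        rw [Nat.succ_mul] at *
        omega
      have hy : y = fun i => (((⟨p i * k + q i, hlt i⟩ : Fin (m * k)) : ℕ) : ℝ) / (m * k : ℕ) := by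
        funext i
        rw [hq i]; push_cast; field_simp
      rw [hy, hfg (fun i => ⟨p i * k + q i, hlt i⟩)]
      simp [gridConst]
    | insert j s hj ih =>
      intro y hy hy2
      have hyc : y ∈ Set.Icc (0 : Fin d → ℝ) 1 :=
        ⟨fun i => (hsub i (hy i)).1, fun i => (hsub i (hy i)).2⟩
      set F : ℝ → ℝ := fun t => f (Function.update y j t)
      set G : ℝ → ℝ := fun t => g (Function.update y j t)
      have hF : ContDiffOn ℝ k F (Set.Icc 0 1) := contDiffOn_slice j hf.1 hyc
      have hG : ContDiffOn ℝ k G (Set.Icc 0 1) := contDiffOn_slice j hg.1 hyc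
      have hpos : (p j : ℝ) / m < p j / m + 1 / m := by
        have : (0 : ℝ) < 1 / m := by positivity
        linarith
      have hnode : ∀ q < k, (p j : ℝ) / m + 1 / m * (q : ℕ) / k
          ∈ Set.Icc ((p j : ℝ) / m) (p j / m + 1 / m) := by
        intro q hq
        have h1 : (q : ℝ) / k ≤ 1 := by
          rw [div_le_one hk0]; exact_mod_cast hq.le
        have h2 : 1 / (m : ℝ) * q / k ≤ 1 / m := by
          rw [mul_div_assoc]; exact mul_le_of_le_one_right (by positivity) h1
        have h3 : 0 ≤ 1 / (m : ℝ) * q / k := by positivity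
        constructor <;> linarith
      have h := oneD_bound k hk ((p j : ℝ) / m) (1 / m) 2
        (gridConst k s.card * (1 / m : ℝ) ^ k) (by positivity) (F - G)
        ((hF.sub hG).mono (hsub j)) ?_ ?_ (hy j)
      · have e : (F - G) (y j) = f y - g y := by simp [F, G]
        rw [e] at h
        rw [Finset.card_insert_of_notMem hj]
        refine h.trans (le_of_eq ?_)
        simp only [gridConst]; ring
      · intro t ht
        have ht' := hsub j ht
        have e1 : iteratedDerivWithin k (F - G) (Set.Icc ((p j : ℝ) / m) (p j / m + 1 / m)) t
            = iteratedDerivWithin k (F - G) (Set.Icc 0 1) t := by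
          simp only [iteratedDerivWithin]
          rw [iteratedFDerivWithin_subset (f := F - G) (hsub j) (uniqueDiffOn_Icc hpos)
            (uniqueDiffOn_Icc zero_lt_one) (hF.sub hG) ht]
        rw [e1, iteratedDerivWithin_sub ht' (uniqueDiffOn_Icc zero_lt_one) (hF t ht') (hG t ht')]
        have b1 := abs_le.1 (hf.slice_bound j hyc ht')
        have b2 := abs_le.1 (hg.slice_bound j hyc ht')
        rw [abs_le]; constructor <;> linarith [b1.1, b1.2, b2.1, b2.2]
      · intro q hq
        refine ih (Function.update y j _) (fun i => ?_) (fun i hi => ?_)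
        · by_cases hij : i = j
          · subst hij; simpa using hnode q hq
          · simpa [hij] using hy i
        · by_cases hij : i = j
          · subst hij; exact ⟨q, hq, by simp⟩
          · obtain ⟨q', hq', e⟩ := hy2 i (by simp [hij, hi])
            exact ⟨q', hq', by simpa [hij] using e⟩
  simpa using key Finset.univ x hp (by simp)

/-! ### Upper bound -/

lemma memFdk.integrableOn {d k : ℕ} {f : (Fin d → ℝ) → ℝ} (hf : memFdk d k f) :
    IntegrableOn f (Set.Icc 0 1) :=
  hf.1.continuousOn.integrableOn_compact isCompact_Icc

lemma volume_cube (d : ℕ) : volume.real (Set.Icc (0 : Fin d → ℝ) 1) = 1 := by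
  simp [Measure.real, Real.volume_Icc_pi]

lemma memFdk.abs_le_one {d k : ℕ} {f : (Fin d → ℝ) → ℝ} (hf : memFdk d k f)
    {x : Fin d → ℝ} (hx : x ∈ Set.Icc (0 : Fin d → ℝ) 1) : |f x| ≤ 1 := by
  have h := hf.2 0 (by simp) x hx
  have e : mDeriv (0 : Fin d → ℕ) f = f := by
    simp only [mDeriv, pdIter]
    induction List.finRange d with
    | nil => rfl
    | cons a l ih => simp
  rwa [e] at h

lemma abs_integral_cube_le {d : ℕ} {h : (Fin d → ℝ) → ℝ} {B : ℝ}
    (hB : ∀ x ∈ Set.Icc (0 : Fin d → ℝ) 1, |h x| ≤ B) :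
    |∫ z in Set.Icc (0 : Fin d → ℝ) 1, h z| ≤ B := by
  have := norm_setIntegral_le_of_norm_le_const (μ := volume) (f := h) (C := B)
    (s := Set.Icc (0 : Fin d → ℝ) 1) isCompact_Icc.measure_lt_top hB
  rwa [volume_cube, mul_one] at this

lemma rpow_eq_inv_pow (n d k : ℕ) :
    (n : ℝ) ^ (-(k : ℝ) / d) = (((n : ℝ) ^ (1 / d : ℝ)) ^ k)⁻¹ := by
  rw [← Real.rpow_natCast, ← Real.rpow_mul (by positivity), ← Real.rpow_neg (by positivity)]
  congr 1; ring

lemma root_pow {n d : ℕ} (hd : 1 ≤ d) : ((n : ℝ) ^ (1 / d : ℝ)) ^ d = n := by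
  rw [one_div]; exact Real.rpow_inv_natCast_pow (by positivity) (by omega)

/-- Upper bound. With at least `k ^ d` points, sample on the grid of `grid_bound` and return the
integral of any member of the class matching the data; with fewer points, return `0`. -/
lemma upper_bound (k d n : ℕ) (hk : 1 ≤ k) (hd : 1 ≤ d) (hn : 1 ≤ n) :
    ∃ x : Fin n → Fin d → ℝ, (∀ i, x i ∈ Set.Icc (0 : Fin d → ℝ) 1) ∧
      ∃ φ : (Fin n → ℝ) → ℝ, ∀ f : (Fin d → ℝ) → ℝ, memFdk d k f →
        |(∫ z in Set.Icc (0 : Fin d → ℝ) 1, f z) - φ (fun i => f (x i))|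
          ≤ ((gridConst k d + 1) * (2 * k) ^ k) * (n : ℝ) ^ (-(k : ℝ) / d) := by
  classical
  rw [rpow_eq_inv_pow]
  set r : ℝ := (n : ℝ) ^ (1 / d : ℝ) with hr
  have hrd : r ^ d = n := root_pow hd
  have hr1 : 1 ≤ r := Real.one_le_rpow (by exact_mod_cast hn) (by positivity)
  have hr0 : 0 < r := by linarith
  have hk0 : (0 : ℝ) < k := by exact_mod_cast hk
  have hK := gridConst_nonneg k d
  rcases lt_or_ge r k with hrk | hrk
  · refine ⟨fun _ => 0, fun _ => ⟨le_rfl, zero_le_one⟩, fun _ => 0, fun f hf => ?_⟩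
    rw [sub_zero]
    refine (abs_integral_cube_le fun x hx => hf.abs_le_one hx).trans ?_
    rw [le_mul_inv_iff₀ (by positivity), one_mul]
    calc r ^ k ≤ (2 * k) ^ k := by gcongr; linarith
      _ ≤ _ := le_mul_of_one_le_left (by positivity) (by linarith)
  · set m := ⌊r / k⌋₊ with hmdef
    have hm : 1 ≤ m := Nat.le_floor (by rw [le_div_iff₀ hk0]; simpa using hrk)
    have hm0 : (0 : ℝ) < m := by exact_mod_cast hm
    have hm1 : (1 : ℝ) ≤ m := by exact_mod_cast hm
    have hmk : (m : ℝ) * k ≤ r := by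
      rw [← le_div_iff₀ hk0]; exact Nat.floor_le (by positivity)
    have hrm : r ≤ 2 * k * m := by
      have h : r / k < m + 1 := Nat.lt_floor_add_one _
      rw [div_lt_iff₀ hk0] at h
      nlinarith
    have hcard : Fintype.card (Fin d → Fin (m * k)) ≤ Fintype.card (Fin n) := by
      have : ((m * k : ℕ) : ℝ) ^ d ≤ n := by
        rw [← hrd]; push_cast; gcongr
      simpa using (by exact_mod_cast this : (m * k) ^ d ≤ n)
    obtain ⟨e⟩ := Function.Embedding.nonempty_of_card_le hcard
    have hmkpos : 0 < m * k := Nat.mul_pos hm hk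
    have : Nonempty (Fin d → Fin (m * k)) := ⟨fun _ => ⟨0, hmkpos⟩⟩
    set pt : (Fin d → Fin (m * k)) → Fin d → ℝ := fun q i => (q i : ℝ) / (m * k : ℕ)
    refine ⟨fun i => pt (Function.invFun e i), fun i => ⟨fun j => ?_, fun j => ?_⟩, ?_⟩
    · simp only [pt, Pi.zero_apply]; positivity
    · simp only [pt, Pi.one_apply]
      rw [div_le_one (by exact_mod_cast hmkpos)]
      exact_mod_cast (Function.invFun e i j).2.le
    · refine ⟨fun y => if h : ∃ g, memFdk d k g ∧ (fun i => g (pt (Function.invFun e i))) = y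
        then ∫ z in Set.Icc (0 : Fin d → ℝ) 1, h.choose z else 0, fun f hf => ?_⟩
      have hex : ∃ g, memFdk d k g ∧ (fun i => g (pt (Function.invFun e i)))
        = fun i => f (pt (Function.invFun e i)) := ⟨f, hf, rfl⟩
      simp only [dif_pos hex]
      obtain ⟨hg, hgf⟩ := hex.choose_spec
      set g := hex.choose
      rw [← integral_sub hf.integrableOn hg.integrableOn]
      refine (abs_integral_cube_le fun x hx => grid_bound hk hm hf hg (fun q => ?_) hx).trans ?_
      · have := congrFun hgf (e q)
        simp only [Function.leftInverse_invFun e.injective q] at this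
        exact this.symm
      · rw [le_mul_inv_iff₀ (by positivity), mul_assoc, ← mul_pow]
        refine (mul_le_mul_of_nonneg_left
          (pow_le_pow_left₀ (by positivity) (?_ : 1 / m * r ≤ 2 * k) k) hK).trans ?_
        · rw [div_mul_eq_mul_div, one_mul, div_le_iff₀ hm0]; exact hrm
        · gcongr; linarith

/-! ### Mixed partial derivatives of smooth functions -/

lemma pd_of_iteratedFDeriv {d N : ℕ} {f g : (Fin d → ℝ) → ℝ} (hf : ContDiff ℝ (⊤ : ℕ∞) f)
    (v : Fin N → Fin d → ℝ)
    (hg : ∀ x ∈ Set.Icc (0 : Fin d → ℝ) 1, g x = iteratedFDeriv ℝ N f x v) (i : Fin d) :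
    ∀ x ∈ Set.Icc (0 : Fin d → ℝ) 1, pd d i g x
      = iteratedFDeriv ℝ (N + 1) f x (Fin.cons (Pi.single i 1) v) := by
  intro x hx
  have hdiff : DifferentiableAt ℝ (iteratedFDeriv ℝ N f) x :=
    (hf.differentiable_iteratedFDeriv (by exact_mod_cast WithTop.coe_lt_top _)) x
  have hG : HasFDerivAt (fun y => iteratedFDeriv ℝ N f y v) _ x :=
    (ContinuousMultilinearMap.apply ℝ (fun _ : Fin N => Fin d → ℝ) ℝ v).hasFDerivAt.comp x
      hdiff.hasFDerivAt
  rw [pd, fderivWithin_congr hg (hg x hx), hG.hasFDerivWithinAt.fderivWithin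
    (uniqueDiffOn_cube d x hx), iteratedFDeriv_succ_apply_left]
  simp

/-- For a smooth `f`, a mixed partial derivative within the cube is the full derivative
`iteratedFDeriv` evaluated at a tuple of vectors of norm at most 1, namely coordinate vectors. -/
lemma mDeriv_eq_iteratedFDeriv {d : ℕ} {f : (Fin d → ℝ) → ℝ} (hf : ContDiff ℝ (⊤ : ℕ∞) f)
    (α : Fin d → ℕ) : ∃ v : Fin (∑ i, α i) → Fin d → ℝ, (∀ i, ‖v i‖ ≤ 1) ∧
      ∀ x ∈ Set.Icc (0 : Fin d → ℝ) 1, mDeriv α f x = iteratedFDeriv ℝ (∑ i, α i) f x v := by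
  have step : ∀ (i : Fin d) (m N : ℕ) (g : (Fin d → ℝ) → ℝ),
      (∃ v : Fin N → Fin d → ℝ, (∀ i, ‖v i‖ ≤ 1) ∧
        ∀ x ∈ Set.Icc (0 : Fin d → ℝ) 1, g x = iteratedFDeriv ℝ N f x v) →
      ∃ v : Fin (N + m) → Fin d → ℝ, (∀ i, ‖v i‖ ≤ 1) ∧
        ∀ x ∈ Set.Icc (0 : Fin d → ℝ) 1, pdIter d i m g x = iteratedFDeriv ℝ (N + m) f x v := by
    intro i m N g hg
    induction m with
    | zero => exact hg
    | succ m ih =>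
      obtain ⟨v, hv, h⟩ := ih
      refine ⟨Fin.cons (Pi.single i 1) v, fun j => ?_, pd_of_iteratedFDeriv hf v h i⟩
      refine Fin.cases ?_ (fun j => ?_) j
      · change ‖(Pi.single i 1 : Fin d → ℝ)‖ ≤ 1
        rw [Pi.norm_single, norm_one]
      · simpa using hv j
  have key : ∀ l : List (Fin d), ∃ v : Fin ((l.map α).sum) → Fin d → ℝ, (∀ i, ‖v i‖ ≤ 1) ∧
      ∀ x ∈ Set.Icc (0 : Fin d → ℝ) 1, l.foldr (fun i g => pdIter d i (α i) g) f x
        = iteratedFDeriv ℝ ((l.map α).sum) f x v := by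
    intro l
    induction l with
    | nil => exact ⟨fun _ => 0, fun _ => by simp, fun x _ => (iteratedFDeriv_zero_apply _).symm⟩
    | cons a l ih =>
      have h := step a (α a) _ _ ih
      rw [List.map_cons, List.sum_cons, add_comm]
      exact h
  rw [Fin.sum_univ_def]
  exact key _

lemma memFdk_of_norm_le {d k : ℕ} {f : (Fin d → ℝ) → ℝ} (hf : ContDiff ℝ (⊤ : ℕ∞) f)
    (hb : ∀ j ≤ k, ∀ x, ‖iteratedFDeriv ℝ j f x‖ ≤ 1) : memFdk d k f := by
  refine ⟨(hf.of_le (by exact_mod_cast le_top)).contDiffOn, fun α hα x hx => ?_⟩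
  obtain ⟨v, hv, h⟩ := mDeriv_eq_iteratedFDeriv hf α
  rw [h x hx, ← Real.norm_eq_abs]
  refine (ContinuousMultilinearMap.le_opNorm _ _).trans ?_
  exact mul_le_one₀ (hb _ hα x) (Finset.prod_nonneg fun _ _ => norm_nonneg _)
    (Finset.prod_le_one (fun _ _ => norm_nonneg _) fun i _ => hv i)

/-! ### Lower bound: fooling functions -/

/-- A smooth bump living well inside the unit cube, with derivatives of order `≤ k` bounded. -/
lemma exists_bump (d k : ℕ) : ∃ (ψ : (Fin d → ℝ) → ℝ) (B : ℝ), ContDiff ℝ (⊤ : ℕ∞) ψ ∧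
    tsupport ψ ⊆ Metric.closedBall (fun _ => 1 / 2) (1 / 4) ∧ 0 < ∫ x, ψ x ∧
    0 < B ∧ ∀ j ≤ k, ∀ x, ‖iteratedFDeriv ℝ j ψ x‖ ≤ B := by
  let b : ContDiffBump (fun _ => 1 / 2 : Fin d → ℝ) := ⟨1 / 8, 1 / 4, by norm_num, by norm_num⟩
  have hsm : ContDiff ℝ (⊤ : ℕ∞) b := b.contDiff
  have hbd : ∀ j : ℕ, ∃ C, ∀ x, ‖iteratedFDeriv ℝ j b x‖ ≤ C := fun j =>
    (b.hasCompactSupport.iteratedFDeriv j).exists_bound_of_continuous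
      (hsm.continuous_iteratedFDeriv (by exact_mod_cast le_top))
  choose C hC using hbd
  refine ⟨b, ∑ j ∈ Finset.range (k + 1), |C j| + 1, hsm, b.tsupport_eq.subset, b.integral_pos,
    by positivity, fun j hj x => ?_⟩
  have h1 : |C j| ≤ ∑ j ∈ Finset.range (k + 1), |C j| :=
    Finset.single_le_sum (f := fun j => |C j|) (fun _ _ => abs_nonneg _)
      (Finset.mem_range.2 (by omega))
  linarith [hC j x, le_abs_self (C j)]

/-- The rescaled bumps `ψ (m x - p)`, `p` integral, have pairwise disjoint supports. -/
lemma cell_unique {d m : ℕ} {y : Fin d → ℝ} {p q : Fin d → Fin m}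
    (hp : y - (fun i => ((p i : ℕ) : ℝ)) ∈ Metric.closedBall (fun _ => 1 / 2 : Fin d → ℝ) (1 / 4))
    (hq : y - (fun i => ((q i : ℕ) : ℝ)) ∈ Metric.closedBall (fun _ => 1 / 2 : Fin d → ℝ) (1 / 4)) :
    p = q := by
  rw [Metric.mem_closedBall, dist_pi_le_iff (by norm_num)] at hp hq
  funext i
  have h1 := hp i
  have h2 := hq i
  simp only [Real.dist_eq, Pi.sub_apply] at h1 h2
  rw [abs_le] at h1 h2
  have h3 : ((p i : ℕ) : ℝ) < (q i : ℕ) + 1 := by linarith [h1.1, h2.2]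
  have h4 : ((q i : ℕ) : ℝ) < (p i : ℕ) + 1 := by linarith [h2.1, h1.2]
  have h5 : (p i : ℕ) < (q i : ℕ) + 1 := by exact_mod_cast h3
  have h6 : (q i : ℕ) < (p i : ℕ) + 1 := by exact_mod_cast h4
  exact Fin.ext (by omega)

/-- Fooling function: with `2 n ≤ m ^ d` cells of side `1 / m`, the bumps of at least half of the
cells vanish at all `n` sample points, and the sum of those bumps has integral `≳ m ^ (-k)`. -/
lemma fooling {d k : ℕ} {ψ : (Fin d → ℝ) → ℝ} {B : ℝ} (hψ : ContDiff ℝ (⊤ : ℕ∞) ψ)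
    (hs : tsupport ψ ⊆ Metric.closedBall (fun _ => 1 / 2) (1 / 4))
    (hI : 0 < ∫ x, ψ x) (hB : 0 < B) (hb : ∀ j ≤ k, ∀ x, ‖iteratedFDeriv ℝ j ψ x‖ ≤ B)
    {n m : ℕ} (hn : 1 ≤ n) (hm : 1 ≤ m) (hmn : 2 * n ≤ m ^ d) (x : Fin n → Fin d → ℝ) :
    ∃ f : (Fin d → ℝ) → ℝ, memFdk d k f ∧ memFdk d k (-f) ∧ (∀ i, f (x i) = 0) ∧
      (∫ z, ψ z) / (2 * B) * ((m : ℝ) ^ k)⁻¹ ≤ ∫ z in Set.Icc (0 : Fin d → ℝ) 1, f z := by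
  classical
  have hm0 : (0 : ℝ) < m := by exact_mod_cast hm
  have hm1 : (1 : ℝ) ≤ m := by exact_mod_cast hm
  set P : (Fin d → Fin m) → Fin d → ℝ := fun p i => ((p i : ℕ) : ℝ) with hP
  have hz : ∀ y, y ∉ Metric.closedBall (fun _ => 1 / 2 : Fin d → ℝ) (1 / 4) → ψ y = 0 :=
    fun y hy => image_eq_zero_of_notMem_tsupport fun h => hy (hs h)
  set E : Finset (Fin d → Fin m) := Finset.univ.filter
    fun p => ∀ i, ψ ((m : ℝ) • x i - P p) = 0 with hE
  have hcard : (m : ℝ) ^ d / 2 ≤ E.card := by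
    have h1 : (Finset.univ \ E).card ≤ n := by
      have hex : ∀ p ∈ Finset.univ \ E, ∃ i, ψ ((m : ℝ) • x i - P p) ≠ 0 := by
        intro p hp
        simpa [hE] using hp
      have : Nonempty (Fin n) := ⟨⟨0, hn⟩⟩
      choose! F hF using hex
      have := Finset.card_le_card_of_injOn F (s := Finset.univ \ E) (t := Finset.univ)
        (fun _ _ => Finset.mem_univ _) (fun p hp q hq hpq => by
          have h2 := hF p hp
          have h3 := hF q hq
          rw [← hpq] at h3
          exact cell_unique (not_imp_comm.1 (hz _) h2) (not_imp_comm.1 (hz _) h3))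
      simpa using this
    have h2 : (Finset.univ \ E).card + E.card = m ^ d := by
      rw [Finset.card_sdiff_add_card_eq_card (Finset.subset_univ E)]; simp
    have h3 : m ^ d ≤ 2 * E.card := by omega
    have h4 : (m : ℝ) ^ d ≤ 2 * E.card := by exact_mod_cast h3
    linarith
  set c : ℝ := (B * (m : ℝ) ^ k)⁻¹ with hc
  have hc0 : 0 < c := by positivity
  set T : (Fin d → Fin m) → (Fin d → ℝ) → ℝ := fun p y => c • ψ ((m : ℝ) • y - P p) with hT
  have hψp : ∀ p, ContDiff ℝ (⊤ : ℕ∞) fun z => ψ (z - P p) := fun p =>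
    hψ.comp (contDiff_id.sub contDiff_const)
  have hTc : ∀ p, ContDiff ℝ (⊤ : ℕ∞) fun y => ψ ((m : ℝ) • y - P p) := fun p =>
    (hψp p).comp (contDiff_const_smul (m : ℝ))
  have hTs : ∀ p, ContDiff ℝ (⊤ : ℕ∞) (T p) := fun p => (hTc p).const_smul c
  have hTd : ∀ p (j : ℕ) y, iteratedFDeriv ℝ j (T p) y
      = c • (m : ℝ) ^ j • iteratedFDeriv ℝ j ψ ((m : ℝ) • y - P p) := by
    intro p j y
    have hj : ((j : ℕ) : WithTop ℕ∞) ≤ ((⊤ : ℕ∞) : WithTop ℕ∞) := by exact_mod_cast le_top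
    rw [hT, iteratedFDeriv_const_smul_apply' ((hTc p).of_le hj).contDiffAt,
      iteratedFDeriv_comp_const_smul (m : ℝ) (f := fun z => ψ (z - P p)) ((hψp p).of_le hj)]
    simp only
    rw [iteratedFDeriv_comp_sub]
  set f : (Fin d → ℝ) → ℝ := fun y => ∑ p ∈ E, T p y with hf
  have hfs : ContDiff ℝ (⊤ : ℕ∞) f := ContDiff.sum fun p _ => hTs p
  have hfb : ∀ j ≤ k, ∀ y, ‖iteratedFDeriv ℝ j f y‖ ≤ 1 := by
    intro j hj y
    have hj' : ((j : ℕ) : WithTop ℕ∞) ≤ ((⊤ : ℕ∞) : WithTop ℕ∞) := by exact_mod_cast le_top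
    have hone : ∀ p, ‖iteratedFDeriv ℝ j (T p) y‖ ≤ 1 := by
      intro p
      rw [hTd, norm_smul, norm_smul, Real.norm_of_nonneg hc0.le, Real.norm_of_nonneg (by positivity)]
      calc c * ((m : ℝ) ^ j * ‖iteratedFDeriv ℝ j ψ ((m : ℝ) • y - P p)‖)
          ≤ c * ((m : ℝ) ^ k * B) := by
            gcongr
            exact hb j hj _
        _ = 1 := by rw [hc]; field_simp
    have hsupp : ∀ p, iteratedFDeriv ℝ j (T p) y ≠ 0 →
        (m : ℝ) • y - P p ∈ Metric.closedBall (fun _ => 1 / 2 : Fin d → ℝ) (1 / 4) := by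
      intro p hne
      refine hs (support_iteratedFDeriv_subset (𝕜 := ℝ) j fun h0 => hne ?_)
      rw [hTd, h0]; simp
    rw [hf, iteratedFDeriv_fun_sum_apply fun p _ => ((hTs p).of_le hj').contDiffAt]
    by_cases hex : ∃ p ∈ E, iteratedFDeriv ℝ j (T p) y ≠ 0
    · obtain ⟨p, hpE, hp⟩ := hex
      rw [Finset.sum_eq_single_of_mem p hpE fun q _ hqp => by
        by_contra hq
        exact hqp (cell_unique (hsupp q hq) (hsupp p hp))]
      exact hone p
    · push Not at hex
      rw [Finset.sum_eq_zero hex]; simp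
  have hTint : ∀ p, (∫ z in Set.Icc (0 : Fin d → ℝ) 1, T p z)
      = c * (((m : ℝ) ^ d)⁻¹ * ∫ z, ψ z) := by
    intro p
    rw [setIntegral_eq_integral_of_forall_compl_eq_zero]
    · simp only [hT]
      rw [integral_smul, Measure.integral_comp_smul_of_nonneg volume (fun z => ψ (z - P p)) (m : ℝ)
        (hR := hm0.le), integral_sub_right_eq_self]
      simp
    · intro z hzc
      simp only [hT]
      rw [hz, smul_zero]
      intro hmem
      apply hzc
      rw [Metric.mem_closedBall, dist_pi_le_iff (by norm_num)] at hmem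
      have hi : ∀ i, 0 ≤ z i ∧ z i ≤ 1 := by
        intro i
        have h1 := hmem i
        simp only [Real.dist_eq, Pi.sub_apply, Pi.smul_apply, smul_eq_mul, hP] at h1
        rw [abs_le] at h1
        have h2 : ((p i : ℕ) : ℝ) + 1 ≤ m := by exact_mod_cast (p i).2
        have h3 : (0 : ℝ) ≤ (p i : ℕ) := by positivity
        constructor
        · by_contra hneg
          nlinarith [h1.1]
        · by_contra hneg
          nlinarith [h1.2]
      exact ⟨fun i => (hi i).1, fun i => (hi i).2⟩
  refine ⟨f, memFdk_of_norm_le hfs hfb, memFdk_of_norm_le hfs.neg fun j hj y => ?_, fun i => ?_, ?_⟩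
  · rw [show (-f) = fun y => -f y from rfl, ← Pi.neg_def, iteratedFDeriv_neg_apply, norm_neg]
    exact hfb j hj y
  · refine Finset.sum_eq_zero fun p hp => ?_
    have := (Finset.mem_filter.1 hp).2 i
    simp [hT, this]
  · simp only [hf]
    rw [integral_finsetSum _ fun p _ =>
      ((hTs p).continuous.continuousOn.integrableOn_compact isCompact_Icc)]
    simp only [hTint, Finset.sum_const, nsmul_eq_mul]
    calc (∫ z, ψ z) / (2 * B) * ((m : ℝ) ^ k)⁻¹
        = (m : ℝ) ^ d / 2 * (c * (((m : ℝ) ^ d)⁻¹ * ∫ z, ψ z)) := by rw [hc]; field_simp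
      _ ≤ _ := by gcongr

/-- A cell count with `2 n ≤ m ^ d` and `m = O(n ^ (1 / d))`. -/
lemma exists_cells {n d : ℕ} (hd : 1 ≤ d) (hn : 1 ≤ n) :
    ∃ m : ℕ, 1 ≤ m ∧ 2 * n ≤ m ^ d ∧ (m : ℝ) ≤ 4 * (n : ℝ) ^ (1 / d : ℝ) := by
  set r : ℝ := (n : ℝ) ^ (1 / d : ℝ) with hr
  have hrd : r ^ d = n := root_pow hd
  have hr1 : 1 ≤ r := Real.one_le_rpow (by exact_mod_cast hn) (by positivity)
  have hce : r ≤ ⌈r⌉₊ := Nat.le_ceil r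
  have hlt : (⌈r⌉₊ : ℝ) < r + 1 := Nat.ceil_lt_add_one (by linarith)
  have hpos : 1 ≤ ⌈r⌉₊ := Nat.one_le_ceil_iff.2 (by linarith)
  refine ⟨2 * ⌈r⌉₊, by omega, ?_, ?_⟩
  · have h1 : n ≤ ⌈r⌉₊ ^ d := by
      have : (n : ℝ) ≤ (⌈r⌉₊ : ℝ) ^ d := by rw [← hrd]; gcongr
      exact_mod_cast this
    rw [mul_pow]
    exact Nat.mul_le_mul (Nat.le_self_pow (by omega) 2) h1
  · push_cast; linarith

/-- Bakhvalov 1959: the `n`-th minimal worst case error of numerical integration on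
`F_d^k` is of order `n^{-k/d}`: there are `c, C > 0` (depending on `k, d`) with
`c n^{-k/d} ≤ e(n, F_d^k) ≤ C n^{-k/d}` for all `n ≥ 1`. -/
theorem stmt1 (k d : ℕ) (hk : 1 ≤ k) (hd : 1 ≤ d) :
    ∃ c C : ℝ, 0 < c ∧ 0 < C ∧ ∀ n : ℕ, 1 ≤ n →
      -- upper bound: some algorithm using n function values achieves error ≤ C n^{-k/d}
      (∃ x : Fin n → Fin d → ℝ, (∀ i, x i ∈ Set.Icc (0 : Fin d → ℝ) 1) ∧
        ∃ φ : (Fin n → ℝ) → ℝ, ∀ f : (Fin d → ℝ) → ℝ, memFdk d k f →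
          |(∫ z in Set.Icc (0 : Fin d → ℝ) 1, f z) - φ (fun i => f (x i))|
            ≤ C * (n : ℝ) ^ (-(k : ℝ) / d)) ∧
      -- lower bound: every algorithm using n function values has worst case error
      -- at least c n^{-k/d}
      (∀ x : Fin n → Fin d → ℝ, (∀ i, x i ∈ Set.Icc (0 : Fin d → ℝ) 1) →
        ∀ φ : (Fin n → ℝ) → ℝ, ∀ ε : ℝ, 0 < ε →
          ∃ f : (Fin d → ℝ) → ℝ, memFdk d k f ∧
            c * (n : ℝ) ^ (-(k : ℝ) / d) - ε
              < |(∫ z in Set.Icc (0 : Fin d → ℝ) 1, f z) - φ (fun i => f (x i))|) := by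
  obtain ⟨ψ, B, hψ, hs, hI, hB, hb⟩ := exists_bump d k
  have hK := gridConst_nonneg k d
  have hk0 : (0 : ℝ) < k := by exact_mod_cast hk
  refine ⟨(∫ z, ψ z) / (2 * B) * (4 ^ k)⁻¹, (gridConst k d + 1) * (2 * k) ^ k, by positivity,
    by positivity, fun n hn => ⟨upper_bound k d n hk hd hn, fun x _ φ ε hε => ?_⟩⟩
  obtain ⟨m, hm, hmn, hmr⟩ := exists_cells hd hn
  obtain ⟨f, hf, hf', hfx, hfI⟩ := fooling hψ hs hI hB hb hn hm hmn x
  have hm0 : (0 : ℝ) < m := by exact_mod_cast hm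
  have hle : (∫ z, ψ z) / (2 * B) * (4 ^ k)⁻¹ * (n : ℝ) ^ (-(k : ℝ) / d)
      ≤ ∫ z in Set.Icc (0 : Fin d → ℝ) 1, f z := by
    refine le_trans ?_ hfI
    rw [rpow_eq_inv_pow, mul_assoc, ← mul_inv, ← mul_pow]
    gcongr
  -- `f` and `-f` give the same data, so the algorithm errs by at least `∫ f` on one of them.
  have hdata : (fun i => f (x i)) = fun _ => (0 : ℝ) := funext hfx
  have hdata' : (fun i => (-f) (x i)) = fun _ => (0 : ℝ) := funext fun i => by simp [hfx i]
  rcases le_total (φ fun _ => 0) 0 with h | h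
  · refine ⟨f, hf, ?_⟩
    rw [hdata]
    refine lt_of_lt_of_le ?_ (le_abs_self _)
    linarith
  · refine ⟨-f, hf', ?_⟩
    rw [hdata']
    refine lt_of_lt_of_le ?_ (neg_le_abs _)
    simp only [Pi.neg_apply, integral_neg]
    linarith
end

section
/- Let F_d = { f : [0,1]^d → ℝ : |f(x) − f(y)| ≤ max_{1≤i≤d} |x_i − y_i| for all x, y ∈ [0,1]^d }. Then for every m ∈ ℕ and n = m^d, the n-th minimal worst-case error satisfies e(n, F_d) = (d/(2d+2)) · n^{−1/d}. -/
/-!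
Write `n = m ^ d`, `R = 1 / (2m)`, so that `n` balls of radius `R` for the maximum metric (cubes
of side `1 / m`) have total volume `1`. For a point `c` let `cone R c z = max 0 (R - dist z c)`.
Integration in polar coordinates gives `∫ cone R c = (2R)^d R / (d + 1)` (`integral_cone`), hence
`R - n ∫ cone R c = R - R / (d + 1) = d / (2d + 2) / m`, which is the claimed error.

Lower bound: the function `r z = infDist z {x₁, …, xₙ}` and its negative both have Lipschitz
constant one and vanish at all nodes, so an algorithm cannot tell them apart and errs by at least
`∫ r` on one of them. Pointwise `r ≥ R - ∑ i, cone R (x i)`, and integrating this over the unit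
cube gives the bound (`le_integral_infDist`).

Upper bound: the nodes are the centres of the `n` cubes of a regular grid and the algorithm is the
mean of the values. The error is at most the sum over the cubes of `∫ dist z c`, and on such a cube
`dist z c = R - cone R c z`, so the same quantity appears (`setIntegral_cell_dist`).
-/

open MeasureTheory Set


/-- The tent of height `R` and slope one over the ball of radius `R` around `c`, in the maximum
metric. -/
noncomputable def cone {d : ℕ} (R : ℝ) (c z : Fin d → ℝ) : ℝ := max 0 (R - dist z c)

/-- The half-open cube of side `2R` centred at `c`; half-open so that the cubes of a grid are
disjoint. -/
def cell {d : ℕ} (R : ℝ) (c : Fin d → ℝ) : Set (Fin d → ℝ) :=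
  univ.pi fun j => Ico (c j - R) (c j + R)

lemma cone_nonneg {d : ℕ} (R : ℝ) (c z : Fin d → ℝ) : 0 ≤ cone R c z := le_max_left _ _

lemma continuous_cone {d : ℕ} (R : ℝ) (c : Fin d → ℝ) : Continuous (cone R c) := by
  unfold cone
  fun_prop

lemma cone_eq_zero {d : ℕ} {R : ℝ} {c z : Fin d → ℝ} (h : z ∉ Metric.closedBall c R) :
    cone R c z = 0 := by
  rw [Metric.mem_closedBall, not_le] at h
  exact max_eq_left (by linarith)

lemma integrable_cone {d : ℕ} (R : ℝ) (c : Fin d → ℝ) : Integrable (cone R c) :=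
  (continuous_cone R c).integrable_of_hasCompactSupport
    (HasCompactSupport.intro (isCompact_closedBall c R) fun _ h => cone_eq_zero h)

lemma integral_cone {d : ℕ} (hd : 1 ≤ d) {R : ℝ} (hR : 0 < R) (c : Fin d → ℝ) :
    ∫ z, cone R c z = (2 * R) ^ d * R / (d + 1) := by
  have hd0 : (d : ℝ) ≠ 0 := by positivity
  have : Nonempty (Fin d) := ⟨⟨0, hd⟩⟩
  have h1 : ∫ z, cone R c z = ∫ z : Fin d → ℝ, max 0 (R - ‖z‖) := by
    rw [← integral_sub_right_eq_self (fun z : Fin d → ℝ => max 0 (R - ‖z‖)) c]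
    simp [cone, dist_eq_norm]
  have hball : (volume : Measure (Fin d → ℝ)).real (Metric.ball 0 1) = 2 ^ d := by
    rw [measureReal_def, Real.volume_pi_ball _ one_pos, ENNReal.toReal_ofReal (by positivity)]
    simp
  have hint : ∫ y in Ioi (0 : ℝ), y ^ (d - 1) • max 0 (R - y) = R ^ (d + 1) / (d * (d + 1)) := by
    have e1 : ∫ y in Ioi (0 : ℝ), y ^ (d - 1) • max 0 (R - y)
        = ∫ y in Ioc (0 : ℝ) R, y ^ (d - 1) • max 0 (R - y) := by
      refine setIntegral_eq_of_subset_of_forall_sdiff_eq_zero measurableSet_Ioi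
        Ioc_subset_Ioi_self ?_
      rintro y ⟨hy0, hy⟩
      have : R < y := by
        by_contra! h
        exact hy ⟨hy0, h⟩
      rw [max_eq_left (by linarith), smul_zero]
    have e2 : ∫ y in Ioc (0 : ℝ) R, y ^ (d - 1) • max 0 (R - y)
        = ∫ y in Ioc (0 : ℝ) R, (R * y ^ (d - 1) - y ^ d) := by
      refine setIntegral_congr_fun measurableSet_Ioc fun y hy => ?_
      obtain ⟨k, rfl⟩ : ∃ k, d = k + 1 := ⟨d - 1, by omega⟩
      simp only [smul_eq_mul, Nat.add_sub_cancel]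
      rw [max_eq_right (by linarith [hy.2])]
      ring
    rw [e1, e2, ← intervalIntegral.integral_of_le hR.le, intervalIntegral.integral_sub,
      intervalIntegral.integral_const_mul, integral_pow, integral_pow]
    · obtain ⟨k, rfl⟩ : ∃ k, d = k + 1 := ⟨d - 1, by omega⟩
      simp only [Nat.add_sub_cancel]
      push_cast
      have h1 : (k : ℝ) + 1 ≠ 0 := by positivity
      have h2 : (k : ℝ) + 1 + 1 ≠ 0 := by positivity
      field_simp
      ring
    · exact (by fun_prop : Continuous fun y : ℝ => R * y ^ (d - 1)).intervalIntegrable _ _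
    · exact (by fun_prop : Continuous fun y : ℝ => y ^ d).intervalIntegrable _ _
  rw [h1, integral_fun_norm_addHaar (volume : Measure (Fin d → ℝ)) (fun y => max 0 (R - y)),
    Module.finrank_fin_fun, hball, hint]
  simp only [nsmul_eq_mul, smul_eq_mul]
  have h2 : (d : ℝ) + 1 ≠ 0 := by positivity
  field_simp
  ring

lemma cell_ae_eq {d : ℕ} {R : ℝ} (hR : 0 ≤ R) (c : Fin d → ℝ) :
    cell R c =ᵐ[volume] Metric.closedBall c R := by
  rw [closedBall_pi c hR]
  simp only [Real.closedBall_eq_Icc, cell]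
  exact Measure.pi_Ico_ae_eq_pi_Icc

lemma cell_subset {d : ℕ} {R : ℝ} (hR : 0 ≤ R) (c : Fin d → ℝ) :
    cell R c ⊆ Metric.closedBall c R := by
  rw [closedBall_pi c hR]
  simp only [Real.closedBall_eq_Icc, cell]
  exact pi_mono fun _ _ => Ico_subset_Icc_self

lemma measurableSet_cell {d : ℕ} (R : ℝ) (c : Fin d → ℝ) : MeasurableSet (cell R c) :=
  MeasurableSet.univ_pi fun _ => measurableSet_Ico

lemma volume_real_cell {d : ℕ} {R : ℝ} (hR : 0 ≤ R) (c : Fin d → ℝ) :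
    (volume : Measure (Fin d → ℝ)).real (cell R c) = (2 * R) ^ d := by
  rw [measureReal_congr (cell_ae_eq hR c), measureReal_def, Real.volume_pi_closedBall _ hR,
    ENNReal.toReal_ofReal (by positivity)]
  simp

lemma integrableOn_cell {d : ℕ} {R : ℝ} (hR : 0 ≤ R) (c : Fin d → ℝ) {g : (Fin d → ℝ) → ℝ}
    (hg : ContinuousOn g (Metric.closedBall c R)) : IntegrableOn g (cell R c) :=
  (hg.integrableOn_compact (isCompact_closedBall c R)).mono_set (cell_subset hR c)

/-- This rests on `dist z c = R - cone R c z` for `z` in the cube. -/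
lemma setIntegral_cell_dist {d : ℕ} (hd : 1 ≤ d) {R : ℝ} (hR : 0 < R) (c : Fin d → ℝ) :
    ∫ z in cell R c, dist z c = (2 * R) ^ d * (R * (d / (d + 1))) := by
  have h1 : ∫ z in cell R c, dist z c = ∫ z in cell R c, (R - cone R c z) := by
    refine setIntegral_congr_fun (measurableSet_cell R c) fun z hz => ?_
    have := Metric.mem_closedBall.1 (cell_subset hR.le c hz)
    simp only [cone]
    rw [max_eq_right (by linarith)]
    ring
  have h2 : ∫ z in cell R c, cone R c z = (2 * R) ^ d * R / (d + 1) := by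
    rw [setIntegral_congr_set (cell_ae_eq hR.le c),
      setIntegral_eq_integral_of_forall_compl_eq_zero fun _ h => cone_eq_zero h,
      integral_cone hd hR]
  rw [h1, integral_sub (integrableOn_cell hR.le c continuousOn_const)
    (integrable_cone R c).integrableOn, h2, setIntegral_const, volume_real_cell hR.le, smul_eq_mul]
  have h2 : (d : ℝ) + 1 ≠ 0 := by positivity
  field_simp
  ring

/-- The centre of the grid cube with multi-index `k`, for the grid of mesh `1 / m`. -/
noncomputable def centre {d m : ℕ} (k : Fin d → Fin m) : Fin d → ℝ :=
  fun j => (2 * ((k j : ℕ) : ℝ) + 1) * (1 / (2 * m))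

lemma mem_cell_centre {d m : ℕ} (hm : 1 ≤ m) (k : Fin d → Fin m) (z : Fin d → ℝ) :
    z ∈ cell (1 / (2 * m)) (centre k) ↔
      ∀ j, ((k j : ℕ) : ℝ) ≤ m * z j ∧ m * z j < ((k j : ℕ) : ℝ) + 1 := by
  have hm' : (0 : ℝ) < m := by positivity
  simp only [cell, centre, mem_univ_pi, mem_Ico]
  refine forall_congr' fun j => and_congr ?_ ?_
  · rw [show (2 * ((k j : ℕ) : ℝ) + 1) * (1 / (2 * m)) - 1 / (2 * m) = (k j : ℕ) / m by
      field_simp; ring, div_le_iff₀ hm', mul_comm]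
  · rw [show (2 * ((k j : ℕ) : ℝ) + 1) * (1 / (2 * m)) + 1 / (2 * m) = ((k j : ℕ) + 1) / m by
      field_simp; ring, lt_div_iff₀ hm', mul_comm]

lemma pairwise_disjoint_cell {d m : ℕ} (hm : 1 ≤ m) :
    Pairwise (Function.onFun Disjoint
      fun k : Fin d → Fin m => cell (1 / (2 * m)) (centre k)) := by
  intro k l hkl
  refine Set.disjoint_left.2 fun z hk hl => hkl ?_
  rw [mem_cell_centre hm] at hk hl
  funext j
  have h1 : ((k j : ℕ) : ℝ) < (l j : ℕ) + 1 := (hk j).1.trans_lt (hl j).2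
  have h2 : ((l j : ℕ) : ℝ) < (k j : ℕ) + 1 := (hl j).1.trans_lt (hk j).2
  norm_cast at h1 h2
  exact Fin.ext (by omega)

lemma iUnion_cell {d m : ℕ} (hm : 1 ≤ m) :
    ⋃ k : Fin d → Fin m, cell (1 / (2 * m)) (centre k) = univ.pi fun _ : Fin d => Ico (0 : ℝ) 1 := by
  have hm' : (0 : ℝ) < m := by positivity
  ext z
  simp only [mem_iUnion, mem_cell_centre hm, mem_univ_pi, mem_Ico]
  constructor
  · rintro ⟨k, hk⟩ j
    obtain ⟨h1, h2⟩ := hk j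
    have h3 : ((k j : ℕ) : ℝ) + 1 ≤ m := by exact_mod_cast (k j).2
    have h4 : (0 : ℝ) ≤ (k j : ℕ) := by positivity
    constructor
    · by_contra! h
      nlinarith
    · by_contra! h
      nlinarith
  · intro hz
    have h0 : ∀ j, 0 ≤ m * z j := fun j => mul_nonneg hm'.le (hz j).1
    refine ⟨fun j => ⟨⌊m * z j⌋₊, (Nat.floor_lt (h0 j)).2 ?_⟩, fun j => ⟨?_, ?_⟩⟩
    · nlinarith [(hz j).2]
    · exact Nat.floor_le (h0 j)
    · exact Nat.lt_floor_add_one _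

lemma closedBall_centre_subset {d m : ℕ} (hm : 1 ≤ m) (k : Fin d → Fin m) :
    Metric.closedBall (centre k) (1 / (2 * m)) ⊆ Icc (0 : Fin d → ℝ) 1 := by
  have hm' : (0 : ℝ) < m := by positivity
  rw [closedBall_pi _ (by positivity), ← pi_univ_Icc]
  refine pi_mono fun j _ => ?_
  rw [Real.closedBall_eq_Icc]
  have h3 : ((k j : ℕ) : ℝ) + 1 ≤ m := by exact_mod_cast (k j).2
  refine Icc_subset_Icc ?_ ?_
  · rw [show centre k j - 1 / (2 * m) = (k j : ℕ) / m by
      simp only [centre]; field_simp; ring]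
    simp only [Pi.zero_apply]
    positivity
  · rw [show centre k j + 1 / (2 * m) = ((k j : ℕ) + 1) / m by
      simp only [centre]; field_simp; ring]
    simpa using (div_le_one hm').2 h3

lemma integral_eq_sum_cell {d m : ℕ} (hm : 1 ≤ m) {f : (Fin d → ℝ) → ℝ}
    (hf : ContinuousOn f (Icc 0 1)) :
    ∫ z in Icc (0 : Fin d → ℝ) 1, f z
      = ∑ k : Fin d → Fin m, ∫ z in cell (1 / (2 * m)) (centre k), f z := by
  have hae : (univ.pi fun _ : Fin d => Ico (0 : ℝ) 1) =ᵐ[volume] Icc (0 : Fin d → ℝ) 1 :=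
    Measure.univ_pi_Ico_ae_eq_Icc
  rw [← setIntegral_congr_set hae, ← iUnion_cell hm]
  exact integral_iUnion_fintype (fun k => measurableSet_cell _ _) (pairwise_disjoint_cell hm)
    fun k => integrableOn_cell (by positivity) _ (hf.mono (closedBall_centre_subset hm k))

lemma continuousOn_of_abs_sub_le {d : ℕ} {s : Set (Fin d → ℝ)} {f : (Fin d → ℝ) → ℝ}
    (hf : ∀ x ∈ s, ∀ y ∈ s, |f x - f y| ≤ dist x y) : ContinuousOn f s := by
  refine LipschitzOnWith.continuousOn (K := 1) (LipschitzOnWith.of_dist_le_mul fun x hx y hy => ?_)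
  simpa [Real.dist_eq] using hf x hx y hy

/-- Error bound for the mean of the values at the `m ^ d` grid cube centres, indexed by
multi-indices; the weight `(1 / m) ^ d` is the volume of a cube. -/
lemma abs_integral_sub_mean_le {d m : ℕ} (hd : 1 ≤ d) (hm : 1 ≤ m) {f : (Fin d → ℝ) → ℝ}
    (hf : ∀ x ∈ Icc (0 : Fin d → ℝ) 1, ∀ y ∈ Icc (0 : Fin d → ℝ) 1, |f x - f y| ≤ dist x y) :
    |(∫ z in Icc (0 : Fin d → ℝ) 1, f z)
        - ∑ k : Fin d → Fin m, (1 / (m : ℝ)) ^ d * f (centre k)| ≤ 1 / (2 * m) * (d / (d + 1)) := by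
  have hm' : (0 : ℝ) < m := by positivity
  have hR : (0 : ℝ) < 1 / (2 * m) := by positivity
  have h2R : 2 * (1 / (2 * (m : ℝ))) = 1 / m := by field_simp
  have hc := continuousOn_of_abs_sub_le hf
  have hcell : ∀ k : Fin d → Fin m,
      |(∫ z in cell (1 / (2 * m)) (centre k), f z) - (1 / (m : ℝ)) ^ d * f (centre k)|
        ≤ (1 / (m : ℝ)) ^ d * (1 / (2 * m) * (d / (d + 1))) := by
    intro k
    have hsub := closedBall_centre_subset hm k
    have hmem : centre k ∈ Icc (0 : Fin d → ℝ) 1 := hsub (Metric.mem_closedBall_self hR.le)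
    have e : (∫ z in cell (1 / (2 * m)) (centre k), f z) - (1 / (m : ℝ)) ^ d * f (centre k)
        = ∫ z in cell (1 / (2 * m)) (centre k), (f z - f (centre k)) := by
      rw [integral_sub (integrableOn_cell hR.le _ (hc.mono hsub))
        (integrableOn_cell hR.le _ continuousOn_const), setIntegral_const,
        volume_real_cell hR.le, h2R, smul_eq_mul]
    rw [e, ← h2R, ← setIntegral_cell_dist hd hR (centre k), ← Real.norm_eq_abs]
    refine norm_integral_le_of_norm_le
      (integrableOn_cell hR.le _ (by fun_prop : Continuous fun z => dist z (centre k)).continuousOn)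
      ((ae_restrict_iff' (measurableSet_cell _ _)).2 (Filter.Eventually.of_forall fun z hz => ?_))
    exact hf z (hsub (cell_subset hR.le _ hz)) _ hmem
  rw [integral_eq_sum_cell hm hc, ← Finset.sum_sub_distrib]
  refine (Finset.abs_sum_le_sum_abs _ _).trans ((Finset.sum_le_sum fun k _ => hcell k).trans ?_)
  rw [Finset.sum_const, Finset.card_univ, Fintype.card_fun, Fintype.card_fin, Fintype.card_fin,
    nsmul_eq_mul, Nat.cast_pow, ← mul_assoc, ← mul_pow, mul_one_div_cancel hm'.ne', one_pow, one_mul]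

/-- The mean over the unit cube of the distance to any `m ^ d` nodes is at least
`d / (2d + 2) / m`; this needs only `infDist z (range x) ≥ R - ∑ i, cone R (x i) z`. -/
lemma le_integral_infDist {d m : ℕ} (hd : 1 ≤ d) (hm : 1 ≤ m) (x : Fin (m ^ d) → Fin d → ℝ) :
    1 / (2 * m) * (d / (d + 1)) ≤ ∫ z in Icc (0 : Fin d → ℝ) 1, Metric.infDist z (range x) := by
  have hm' : (0 : ℝ) < m := by positivity
  set R : ℝ := 1 / (2 * m) with hRdef
  have hR : (0 : ℝ) < R := by positivity
  have : Nonempty (Fin (m ^ d)) := ⟨⟨0, by positivity⟩⟩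
  have hpt : ∀ z, R - ∑ i, cone R (x i) z ≤ Metric.infDist z (range x) := by
    intro z
    obtain ⟨-, ⟨i, rfl⟩, hi⟩ := (finite_range x).isCompact.exists_infDist_eq_dist
      (range_nonempty x) z
    have h1 : cone R (x i) z ≤ ∑ i, cone R (x i) z :=
      Finset.single_le_sum (f := fun i => cone R (x i) z) (fun j _ => cone_nonneg R (x j) z)
        (Finset.mem_univ i)
    have h2 : R - dist z (x i) ≤ cone R (x i) z := le_max_right _ _
    rw [hi]
    linarith
  have hvol : (volume : Measure (Fin d → ℝ)).real (Icc 0 1) = 1 := by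
    simp [measureReal_def, Real.volume_Icc_pi]
  have hconst : IntegrableOn (fun _ : Fin d → ℝ => R) (Icc 0 1) :=
    continuousOn_const.integrableOn_compact isCompact_Icc
  have hsum : IntegrableOn (fun z => ∑ i, cone R (x i) z) (Icc (0 : Fin d → ℝ) 1) :=
    (integrable_finsetSum _ fun i _ => integrable_cone R (x i)).integrableOn
  calc 1 / (2 * m) * (d / (d + 1))
      = R - ∑ i : Fin (m ^ d), (2 * R) ^ d * R / (d + 1) := by
        have h2 : (d : ℝ) + 1 ≠ 0 := by positivity
        rw [Finset.sum_const, Finset.card_univ, Fintype.card_fin, nsmul_eq_mul, Nat.cast_pow,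
          mul_div_assoc ((2 * R) ^ d), ← mul_assoc, ← mul_pow,
          show (m : ℝ) * (2 * R) = 1 by rw [hRdef]; field_simp, one_pow, one_mul, hRdef]
        field_simp
        ring
    _ ≤ R - ∑ i, ∫ z in Icc (0 : Fin d → ℝ) 1, cone R (x i) z := by
        refine sub_le_sub_left (Finset.sum_le_sum fun i _ => ?_) _
        rw [← integral_cone hd hR (x i)]
        exact setIntegral_le_integral (integrable_cone R (x i))
          (Filter.Eventually.of_forall fun z => cone_nonneg R (x i) z)
    _ = ∫ z in Icc (0 : Fin d → ℝ) 1, (R - ∑ i, cone R (x i) z) := by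
        rw [integral_sub hconst hsum, setIntegral_const, hvol, one_smul,
          integral_finsetSum _ fun i _ => (integrable_cone R (x i)).integrableOn]
    _ ≤ _ := by
        refine setIntegral_mono (hconst.sub hsum) ?_ hpt
        exact (Metric.continuous_infDist_pt _).continuousOn.integrableOn_compact isCompact_Icc

lemma error_eq {d m : ℕ} (hd : 1 ≤ d) (hm : 1 ≤ m) :
    ((d : ℝ) / (2 * d + 2)) * ((m ^ d : ℕ) : ℝ) ^ (-(1 : ℝ) / d)
      = 1 / (2 * m) * (d / (d + 1)) := by
  have hm' : (0 : ℝ) < m := by positivity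
  have h2 : (d : ℝ) + 1 ≠ 0 := by positivity
  have h : ((m ^ d : ℕ) : ℝ) ^ (-(1 : ℝ) / d) = 1 / m := by
    rw [Nat.cast_pow, neg_div, Real.rpow_neg (by positivity), one_div (d : ℝ),
      Real.pow_rpow_inv_natCast hm'.le (by omega), one_div]
  rw [h, show (2 : ℝ) * d + 2 = 2 * (d + 1) by ring]
  field_simp

/-- Maung Zho Newn and Sharygin: for the class of functions on `[0,1]^d` that are
Lipschitz with constant 1 with respect to the maximum metric
(`|f x - f y| ≤ max_i |x i - y i| = dist x y` in the sup-metric on `Fin d → ℝ`),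
the `n`-th minimal worst case error for `n = m^d` equals `(d/(2d+2)) · n^{-1/d}`.
The equality is expressed by an upper bound achieved by some (nonadaptive) algorithm
together with the matching lower bound for every algorithm. -/
theorem stmt2 (d m : ℕ) (hd : 1 ≤ d) (hm : 1 ≤ m) :
    -- upper bound: some algorithm using n = m^d function values has worst case error
    -- at most (d/(2d+2)) · n^{-1/d}
    (∃ x : Fin (m ^ d) → Fin d → ℝ, (∀ i, x i ∈ Set.Icc (0 : Fin d → ℝ) 1) ∧
      ∃ φ : (Fin (m ^ d) → ℝ) → ℝ,
        ∀ f : (Fin d → ℝ) → ℝ,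
          (∀ x ∈ Set.Icc (0 : Fin d → ℝ) 1, ∀ y ∈ Set.Icc (0 : Fin d → ℝ) 1,
            |f x - f y| ≤ dist x y) →
          |(∫ z in Set.Icc (0 : Fin d → ℝ) 1, f z) - φ (fun i => f (x i))|
            ≤ ((d : ℝ) / (2 * d + 2)) * ((m ^ d : ℕ) : ℝ) ^ (-(1 : ℝ) / d)) ∧
    -- lower bound: every algorithm using n = m^d function values has worst case error
    -- at least (d/(2d+2)) · n^{-1/d}
    (∀ x : Fin (m ^ d) → Fin d → ℝ, (∀ i, x i ∈ Set.Icc (0 : Fin d → ℝ) 1) →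
      ∀ φ : (Fin (m ^ d) → ℝ) → ℝ, ∀ ε : ℝ, 0 < ε →
        ∃ f : (Fin d → ℝ) → ℝ,
          (∀ x ∈ Set.Icc (0 : Fin d → ℝ) 1, ∀ y ∈ Set.Icc (0 : Fin d → ℝ) 1,
            |f x - f y| ≤ dist x y) ∧
          ((d : ℝ) / (2 * d + 2)) * ((m ^ d : ℕ) : ℝ) ^ (-(1 : ℝ) / d) - ε
            < |(∫ z in Set.Icc (0 : Fin d → ℝ) 1, f z) - φ (fun i => f (x i))|) := by
  rw [error_eq hd hm]
  constructor
  · refine ⟨fun i => centre (finFunctionFinEquiv.symm i), fun i => ?_,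
      fun v => ∑ i, (1 / (m : ℝ)) ^ d * v i, fun f hf => ?_⟩
    · exact closedBall_centre_subset hm _ (Metric.mem_closedBall_self (by positivity))
    · have e : ∑ i : Fin (m ^ d), (1 / (m : ℝ)) ^ d * f (centre (finFunctionFinEquiv.symm i))
          = ∑ k : Fin d → Fin m, (1 / (m : ℝ)) ^ d * f (centre k) :=
        Equiv.sum_comp finFunctionFinEquiv.symm
          fun k : Fin d → Fin m => (1 / (m : ℝ)) ^ d * f (centre k)
      beta_reduce
      rw [e]
      exact abs_integral_sub_mean_le hd hm hf
  · intro x _ φ ε hε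
    have hI := le_integral_infDist hd hm x
    have hlip : ∀ y z, |Metric.infDist y (range x) - Metric.infDist z (range x)| ≤ dist y z := by
      intro y z
      simpa [Real.dist_eq] using (Metric.lipschitz_infDist_pt (range x)).dist_le_mul y z
    have h0 : ∀ i, Metric.infDist (x i) (range x) = 0 :=
      fun i => Metric.infDist_zero_of_mem (mem_range_self i)
    -- The sign is chosen opposite to that of the answer `φ 0` for vanishing data.
    rcases le_total (φ fun _ => 0) 0 with hφ | hφ
    · refine ⟨fun z => Metric.infDist z (range x), fun y _ z _ => hlip y z, ?_⟩
      simp only [h0]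
      exact lt_of_lt_of_le (by linarith) (le_abs_self _)
    · refine ⟨fun z => -Metric.infDist z (range x), fun y _ z _ => ?_, ?_⟩
      · rw [neg_sub_neg, abs_sub_comm]
        exact hlip y z
      · simp only [h0, neg_zero, integral_neg]
        exact lt_of_lt_of_le (by linarith) (neg_le_abs _)
end

section
/- Let F_d = { f : [0,1]^d → ℝ : |f(x) − f(y)| ≤ max_{1≤i≤d} |x_i − y_i| for all x, y ∈ [0,1]^d }. For m ∈ ℕ let n = m^d and let x_1,…,x_n be the regular grid of all points whose coordinates lie in {1/(2m), 3/(2m), …, (2m−1)/(2m)}. Then the midpoint rule A_n(f) = (1/n) Σ_{i=1}^n f(x_i) satisfies sup_{f ∈ F_d} | ∫_{[0,1]^d} f(x) dx − A_n(f) | = (d/(2d+2)) · m^{−1}. -/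
open MeasureTheory Set

/-!
Write `r = 1/(2m)`. In the maximum metric the `m^d` cells of the partition are the closed balls of
radius `r` around the grid points; they cover `[0,1]^d` and overlap only in null sets
(`integral_cells`). The error of the midpoint rule is therefore the sum over the cells of
`∫_cell (f z - f c)`, where `c` is the centre of the cell (`error_eq`). For a 1-Lipschitz `f` each
term is at most `∫_cell dist z c`, which polar integration for the maximum norm evaluates as
`(2r)^d · d/(d+1) · r` (`integral_dist`); summing `m^d = (2r)^{-d}` such terms gives
`d/(d+1) · r = d/(2d+2) · m⁻¹`.

The bound is attained by the distance to the set of grid points: it is 1-Lipschitz, vanishes at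
the nodes, and on each cell equals the distance to the centre, since distinct grid points are at
distance at least `2r`.
-/

/-- The `m` intervals of length `1/m` around the one-dimensional midpoints cover `[0,1]`. -/
theorem exists_cell (m : ℕ) (hm : 1 ≤ m) (t : ℝ) (h0 : 0 ≤ t) (h1 : t ≤ 1) :
    ∃ k : Fin m, |t - (2 * (k : ℝ) + 1) / (2 * m)| ≤ 1 / (2 * m) := by
  have hm' : (0 : ℝ) < m := by exact_mod_cast hm
  have key : ∀ k : ℕ, (k : ℝ) ≤ m * t → m * t ≤ k + 1 →
      |t - (2 * (k : ℝ) + 1) / (2 * m)| ≤ 1 / (2 * m) := by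
    intro k h h'
    have e : t - (2 * (k : ℝ) + 1) / (2 * m) = (2 * (m * t) - (2 * k + 1)) / (2 * m) := by
      field_simp
    rw [e, abs_div, abs_of_pos (by positivity : (0 : ℝ) < 2 * m)]
    gcongr
    rw [abs_le]
    constructor <;> linarith
  rcases h1.eq_or_lt with rfl | h1
  · refine ⟨⟨m - 1, by omega⟩, key _ ?_ ?_⟩ <;> rw [Nat.cast_sub hm] <;> simp
  · have hf : ⌊m * t⌋₊ < m := by
      rw [Nat.floor_lt (by positivity)]
      nlinarith
    exact ⟨⟨_, hf⟩, key _ (Nat.floor_le (by positivity)) (Nat.lt_floor_add_one _).le⟩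

theorem cell_bounds (m : ℕ) (hm : 1 ≤ m) (k : Fin m) (t : ℝ)
    (h : |t - (2 * (k : ℝ) + 1) / (2 * m)| ≤ 1 / (2 * m)) : 0 ≤ t ∧ t ≤ 1 := by
  have hm' : (0 : ℝ) < m := by exact_mod_cast hm
  have hk : (k : ℝ) + 1 ≤ m := by exact_mod_cast k.2
  have hk0 : (0 : ℝ) ≤ k := by positivity
  have e : t - (2 * (k : ℝ) + 1) / (2 * m) = (2 * (m * t) - (2 * k + 1)) / (2 * m) := by
    field_simp
  rw [e, abs_div, abs_of_pos (by positivity : (0 : ℝ) < 2 * m),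
    div_le_div_iff_of_pos_right (by positivity), abs_le] at h
  constructor <;> by_contra! hc <;> nlinarith

/-- The midpoint of the grid cell with index `v`. -/
noncomputable def gridPoint (d m : ℕ) (v : Fin d → Fin m) : Fin d → ℝ :=
  fun i => (2 * (v i : ℝ) + 1) / (2 * m)

/-- In the maximum metric the cells of the partition are closed balls around the midpoints. -/
theorem iUnion_cells (d m : ℕ) (hm : 1 ≤ m) :
    ⋃ v : Fin d → Fin m, Metric.closedBall (gridPoint d m v) (1 / (2 * m)) =
      Icc (0 : Fin d → ℝ) 1 := by
  have hr : (0 : ℝ) ≤ 1 / (2 * m) := by positivity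
  ext x
  simp only [mem_iUnion, Metric.mem_closedBall, dist_pi_le_iff hr, Real.dist_eq, gridPoint,
    mem_Icc, Pi.le_def, Pi.zero_apply, Pi.one_apply]
  constructor
  · rintro ⟨v, hv⟩
    exact ⟨fun i => (cell_bounds m hm _ _ (hv i)).1, fun i => (cell_bounds m hm _ _ (hv i)).2⟩
  · rintro ⟨h0, h1⟩
    choose v hv using fun i => exists_cell m hm (x i) (h0 i) (h1 i)
    exact ⟨v, hv⟩

theorem dist_gridPoint (d m : ℕ) (hm : 1 ≤ m) {v w : Fin d → Fin m} (h : v ≠ w) :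
    1 / (2 * m) + 1 / (2 * m) ≤ dist (gridPoint d m v) (gridPoint d m w) := by
  have hm' : (0 : ℝ) < m := by exact_mod_cast hm
  obtain ⟨i, hi⟩ := Function.ne_iff.1 h
  refine le_trans ?_ (dist_le_pi_dist _ _ i)
  have e : (2 * (v i : ℝ) + 1) / (2 * m) - (2 * (w i : ℝ) + 1) / (2 * m) =
      ((v i : ℤ) - (w i : ℤ) : ℤ) / (m : ℝ) := by
    push_cast; field_simp; ring
  have h1 : (1 : ℝ) ≤ |(((v i : ℤ) - (w i : ℤ) : ℤ) : ℝ)| := by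
    have hne : (v i : ℤ) - (w i : ℤ) ≠ 0 := by
      intro hc; apply hi; ext; omega
    exact_mod_cast Int.one_le_abs hne
  rw [Real.dist_eq, gridPoint, gridPoint, e, abs_div, abs_of_pos hm']
  calc (1 : ℝ) / (2 * m) + 1 / (2 * m) = 1 / m := by field_simp; norm_num
    _ ≤ _ := by gcongr

theorem integral_cells (d m : ℕ) (hm : 1 ≤ m) (f : (Fin d → ℝ) → ℝ)
    (hf : IntegrableOn f (Icc 0 1)) :
    ∫ z in Icc (0 : Fin d → ℝ) 1, f z =
      ∑ v : Fin d → Fin m, ∫ z in Metric.closedBall (gridPoint d m v) (1 / (2 * m)), f z := by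
  have hm' : (0 : ℝ) < m := by exact_mod_cast hm
  have hr : (1 : ℝ) / (2 * m) ≠ 0 := by positivity
  rw [← iUnion_cells d m hm] at hf ⊢
  rw [integral_iUnion_ae (fun v => measurableSet_closedBall.nullMeasurableSet) ?_ hf, tsum_fintype]
  intro v w hvw
  -- neighbouring closed cells overlap only in their boundaries, which are null sets
  have hb : ∀ c : Fin d → ℝ, Metric.ball c (1 / (2 * (m : ℝ))) =ᵐ[volume]
      Metric.closedBall c (1 / (2 * m)) := fun c => by
    have : Metric.closedBall c (1 / (2 * (m : ℝ))) =
      Metric.ball c (1 / (2 * m)) ∪ Metric.sphere c (1 / (2 * m)) :=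
        Metric.ball_union_sphere.symm
    rw [this]
    exact (union_ae_eq_left_of_ae_eq_empty
      (ae_eq_empty.2 (Measure.addHaar_sphere_of_ne_zero _ _ hr))).symm
  exact (Metric.ball_disjoint_ball (dist_gridPoint d m hm hvw)).aedisjoint.congr
    (hb _).symm (hb _).symm

/-- Polar integration for the maximum norm, whose ball of radius `t` has volume `(2t)^d`. -/
theorem integral_dist (d : ℕ) (hd : 1 ≤ d) (c : Fin d → ℝ) (r : ℝ) (hr : 0 ≤ r) :
    ∫ z in Metric.closedBall c r, dist z c = (2 * r) ^ d * (d / (d + 1) * r) := by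
  have : Nonempty (Fin d) := ⟨⟨0, hd⟩⟩
  have h1 : ∫ z in Metric.closedBall c r, dist z c =
      ∫ z : Fin d → ℝ, (Iic r).indicator id ‖z‖ := by
    rw [← integral_sub_right_eq_self (fun z : Fin d → ℝ => (Iic r).indicator id ‖z‖) c,
      ← integral_indicator measurableSet_closedBall]
    congr 1
  have h2 : ∫ y in Ioi (0 : ℝ), y ^ (d - 1) • (Iic r).indicator id y = ∫ y in (0 : ℝ)..r, y ^ d := by
    rw [intervalIntegral.integral_of_le hr, ← Ioi_inter_Iic,
      ← setIntegral_indicator measurableSet_Iic]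
    congr 1; ext y
    obtain ⟨e, rfl⟩ : ∃ e, d = e + 1 := ⟨d - 1, by omega⟩
    by_cases h : y ≤ r <;> simp [indicator, h, pow_succ]
  have h3 : volume.real (Metric.ball (0 : Fin d → ℝ) 1) = 2 ^ d := by
    rw [Measure.real, Real.volume_pi_ball _ one_pos]
    simp
  rw [h1, integral_fun_norm_addHaar, Module.finrank_fin_fun, h2, h3, integral_pow]
  simp
  ring

theorem volume_cell (d : ℕ) (c : Fin d → ℝ) (r : ℝ) (hr : 0 ≤ r) :
    volume.real (Metric.closedBall c r) = (2 * r) ^ d := by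
  rw [Measure.real, Real.volume_pi_closedBall _ hr, Fintype.card_fin, ENNReal.toReal_ofReal]
  positivity

theorem error_eq_s3 (d m : ℕ) (hm : 1 ≤ m) (f : (Fin d → ℝ) → ℝ)
    (hf : IntegrableOn f (Icc 0 1)) :
    (∫ z in Icc (0 : Fin d → ℝ) 1, f z) -
        (1 / (m ^ d : ℝ)) * ∑ v : Fin d → Fin m, f (gridPoint d m v) =
      ∑ v : Fin d → Fin m, ∫ z in Metric.closedBall (gridPoint d m v) (1 / (2 * m)),
        (f z - f (gridPoint d m v)) := by
  have hm' : (0 : ℝ) < m := by exact_mod_cast hm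
  rw [integral_cells d m hm f hf, Finset.mul_sum, ← Finset.sum_sub_distrib]
  refine Finset.sum_congr rfl fun v _ => ?_
  have hsub : Metric.closedBall (gridPoint d m v) (1 / (2 * m)) ⊆ Icc 0 1 := by
    rw [← iUnion_cells d m hm]
    exact subset_iUnion (fun v => Metric.closedBall (gridPoint d m v) (1 / (2 * (m : ℝ)))) v
  rw [integral_sub (hf.mono_set hsub)
    (integrableOn_const (Metric.isBounded_closedBall.measure_lt_top.ne)),
    setIntegral_const, volume_cell _ _ _ (by positivity), smul_eq_mul]
  congr 2
  rw [← one_div_pow]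
  congr 1
  field_simp

theorem sum_integral_dist (d m : ℕ) (hd : 1 ≤ d) (hm : 1 ≤ m) :
    ∑ v : Fin d → Fin m, ∫ z in Metric.closedBall (gridPoint d m v) (1 / (2 * m)),
      dist z (gridPoint d m v) = ((d : ℝ) / (2 * d + 2)) * (m : ℝ)⁻¹ := by
  have hm' : (0 : ℝ) < m := by exact_mod_cast hm
  have hr : (0 : ℝ) ≤ 1 / (2 * m) := by positivity
  have e : 2 * (1 / (2 * (m : ℝ))) = (m : ℝ)⁻¹ := by field_simp
  simp only [integral_dist d hd _ _ hr, Finset.sum_const, Finset.card_univ, Fintype.card_pi,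
    Fintype.card_fin, Finset.prod_const, nsmul_eq_mul, e, inv_pow]
  push_cast
  field_simp


/-- The midpoint rule at the `n = m^d` centers of the uniform partition of `[0,1]^d`
has worst case error exactly `(d/(2d+2)) · m⁻¹` on the class of functions that are
Lipschitz with constant 1 with respect to the maximum metric
(`|f x - f y| ≤ max_i |x i - y i| = dist x y` in the sup-metric on `Fin d → ℝ`).
The grid points are indexed by `v : Fin d → Fin m`, the point with index `v` having
coordinates `(2 v i + 1)/(2m)`.  The equality `sup = value` is expressed as the
conjunction of the upper bound for all `f` and the approximate attainment. -/
theorem stmt3 (d m : ℕ) (hd : 1 ≤ d) (hm : 1 ≤ m) :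
    (∀ f : (Fin d → ℝ) → ℝ,
      (∀ x ∈ Set.Icc (0 : Fin d → ℝ) 1, ∀ y ∈ Set.Icc (0 : Fin d → ℝ) 1,
        |f x - f y| ≤ dist x y) →
      |(∫ z in Set.Icc (0 : Fin d → ℝ) 1, f z) -
          (1 / (m ^ d : ℝ)) * ∑ v : Fin d → Fin m, f (fun i => (2 * (v i : ℝ) + 1) / (2 * m))|
        ≤ ((d : ℝ) / (2 * d + 2)) * (m : ℝ)⁻¹) ∧
    (∀ ε : ℝ, 0 < ε →
      ∃ f : (Fin d → ℝ) → ℝ,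
        (∀ x ∈ Set.Icc (0 : Fin d → ℝ) 1, ∀ y ∈ Set.Icc (0 : Fin d → ℝ) 1,
          |f x - f y| ≤ dist x y) ∧
        ((d : ℝ) / (2 * d + 2)) * (m : ℝ)⁻¹ - ε
          < |(∫ z in Set.Icc (0 : Fin d → ℝ) 1, f z) -
              (1 / (m ^ d : ℝ)) * ∑ v : Fin d → Fin m, f (fun i => (2 * (v i : ℝ) + 1) / (2 * m))|) := by
  have hball : ∀ v : Fin d → Fin m,
      Metric.closedBall (gridPoint d m v) (1 / (2 * m)) ⊆ Icc 0 1 := fun v => by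
    rw [← iUnion_cells d m hm]
    exact subset_iUnion (fun v => Metric.closedBall (gridPoint d m v) (1 / (2 * (m : ℝ)))) v
  have hmem : ∀ v : Fin d → Fin m, gridPoint d m v ∈ Icc (0 : Fin d → ℝ) 1 := fun v =>
    hball v (Metric.mem_closedBall_self (by positivity))
  have hint : ∀ f : (Fin d → ℝ) → ℝ,
      (∀ x ∈ Icc (0 : Fin d → ℝ) 1, ∀ y ∈ Icc (0 : Fin d → ℝ) 1, |f x - f y| ≤ dist x y) →
      IntegrableOn f (Icc 0 1) := fun f hf => by
    have hL : LipschitzOnWith 1 f (Icc 0 1) :=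
      LipschitzOnWith.of_dist_le_mul fun x hx y hy => by
        simpa [Real.dist_eq] using hf x hx y hy
    exact hL.continuousOn.integrableOn_compact isCompact_Icc
  refine ⟨fun f hf => ?_, fun ε hε => ?_⟩
  · have h := error_eq_s3 d m hm f (hint f hf)
    refine (congrArg abs h).trans_le ?_
    rw [← sum_integral_dist d m hd hm]
    refine (Finset.abs_sum_le_sum_abs _ _).trans (Finset.sum_le_sum fun v _ => ?_)
    refine norm_integral_le_of_norm_le (f := fun z => f z - f (gridPoint d m v)) ?_ ?_
    · exact (Continuous.continuousOn (by fun_prop)).integrableOn_compact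
        (isCompact_closedBall _ _)
    · filter_upwards [ae_restrict_mem measurableSet_closedBall] with z hz
      exact hf z (hball v hz) _ (hmem v)
  · have hlip : ∀ x y : Fin d → ℝ, |Metric.infDist x (range (gridPoint d m)) -
        Metric.infDist y (range (gridPoint d m))| ≤ dist x y := fun x y => by
      simpa [Real.dist_eq] using (Metric.lipschitz_infDist_pt (range (gridPoint d m))).dist_le_mul x y
    refine ⟨fun x => Metric.infDist x (range (gridPoint d m)), fun x _ y _ => hlip x y, ?_⟩
    have h := error_eq_s3 d m hm (fun x => Metric.infDist x (range (gridPoint d m)))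
      (hint _ fun x _ y _ => hlip x y)
    -- on each cell the nearest grid point is its centre
    have hcell : ∀ v : Fin d → Fin m,
        ∫ z in Metric.closedBall (gridPoint d m v) (1 / (2 * m)),
          (Metric.infDist z (range (gridPoint d m)) -
            Metric.infDist (gridPoint d m v) (range (gridPoint d m))) =
        ∫ z in Metric.closedBall (gridPoint d m v) (1 / (2 * m)), dist z (gridPoint d m v) := by
      intro v
      refine setIntegral_congr_fun measurableSet_closedBall fun z hz => ?_
      simp only [Metric.infDist_zero_of_mem (mem_range_self v), sub_zero]
      refine le_antisymm (Metric.infDist_le_dist_of_mem (mem_range_self v)) ?_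
      rw [Metric.le_infDist ⟨_, mem_range_self v⟩]
      rintro _ ⟨w, rfl⟩
      rcases eq_or_ne v w with rfl | hvw
      · rfl
      · have h1 := dist_gridPoint d m hm hvw
        have h2 := dist_triangle_left (gridPoint d m v) (gridPoint d m w) z
        rw [Metric.mem_closedBall] at hz
        linarith
    simp only [hcell] at h
    rw [sum_integral_dist d m hd hm] at h
    exact ((sub_lt_self _ hε).trans_le (le_abs_self _)).trans_eq (congrArg abs h.symm)
end
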